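/- arXiv:2109.05456 — 12 statements merged into one kernel-verified Lean document; each statement's English description precedes it below -/
import Mathlib

section
/- Let γ=(B,M,S,A,Â) be a market with middlemen and γ*=(B,S,A*) the associated two-sided assignment market. If σ is an optimal matching for γ* (i.e. its value attains w_{γ*}(B∪S)), then the induced N-matching σ^△ is an optimal matching for γ (i.e. its value attains v_γ(N)). -/
/-!
Matching markets with middlemen (Atay, Bahel, Solymosi).

Players are of three sorts: buyers `B`, middlemen `M`, sellers `S`
(three disjoint nonempty finite types); the player set is `Player B M S = B ⊕ M ⊕ S`.
An (functional representation of a) `T`-matching assigns to each buyer either nothing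
(the buyer is single), a seller (direct trade), or a middleman together with a seller
(mediated trade); distinct buyers get distinct sellers, and all agents involved lie in `T`.
A middleman may mediate several trades.
-/

open scoped Classical

noncomputable section

/-- The set of players of a market with middlemen: buyers `B`, middlemen `M`, sellers `S`. -/
abbrev Player (B M S : Type*) := B ⊕ M ⊕ S

/-- Functional representation of a matching in the market with middlemen: each buyer is
unmatched (`none`), matched directly to a seller (`some (none, k)`), or matched to a seller
through a middleman (`some (some j, k)`). -/
abbrev MMatch (B M S : Type*) := B → Option (Option M × S)

namespace Middlemen

variable {B M S : Type*}

/-- A buyer as a player. -/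
def buyer (i : B) : Player B M S := Sum.inl i

/-- A middleman as a player. -/
def mid (j : M) : Player B M S := Sum.inr (Sum.inl j)

/-- A seller as a player. -/
def seller (k : S) : Player B M S := Sum.inr (Sum.inr k)

/-- `f` is a `T`-matching in the market with middlemen: every basic coalition used by `f`
is contained in `T` and no seller is matched to two distinct buyers.  (Buyers, middlemen
and sellers of `T` not appearing in any trade are singletons of the matching.) -/
def IsMatching (T : Finset (Player B M S)) (f : MMatch B M S) : Prop :=
  (∀ i o k, f i = some (o, k) →
      buyer i ∈ T ∧ seller k ∈ T ∧ ∀ j, o = some j → mid j ∈ T) ∧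
  (∀ i i' o o' k, f i = some (o, k) → f i' = some (o', k) → i = i')

variable [Fintype B] [Fintype M] [Fintype S]

/-- The value `Σ_{(i,k)∈μ} a_{ik} + Σ_{(i,j,k)∈μ} â_{ijk}` of a matching in the market
with middlemen with direct-trade surplus matrix `A` and mediated-trade surpluses `Ah`. -/
def mval (A : B → S → ℝ) (Ah : B → M → S → ℝ) (f : MMatch B M S) : ℝ :=
  ∑ i, (match f i with
    | none => 0
    | some (none, k) => A i k
    | some (some j, k) => Ah i j k)

/-- The TU game `v_γ` associated with the market with middlemen `γ = (B,M,S,A,Ah)`: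
the worth of a coalition `T` is the maximal value of a `T`-matching. -/
def vGame (A : B → S → ℝ) (Ah : B → M → S → ℝ) (T : Finset (Player B M S)) : ℝ :=
  sSup { r | ∃ f : MMatch B M S, IsMatching T f ∧ r = mval A Ah f }

/-- `g` is a matching of the coalition `R` in a two-sided assignment market. -/
def IsMatching2 (R : Finset (B ⊕ S)) (g : B → Option S) : Prop :=
  (∀ i k, g i = some k → Sum.inl i ∈ R ∧ Sum.inr k ∈ R) ∧
  (∀ i i' k, g i = some k → g i' = some k → i = i')

/-- The value of a two-sided matching with valuation matrix `As`. -/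
def m2val (As : B → S → ℝ) (g : B → Option S) : ℝ :=
  ∑ i, (match g i with
    | none => 0
    | some k => As i k)

/-- The assignment game `w_{γ*}` of the two-sided assignment market `(B,S,As)`. -/
def wGame (As : B → S → ℝ) (R : Finset (B ⊕ S)) : ℝ :=
  sSup { r | ∃ g : B → Option S, IsMatching2 R g ∧ r = m2val As g }

/-- The matrix `A*` of the associated two-sided assignment market:
`a*_{ik} = max_{j ∈ M} â_{ijk}`. -/
def Astar [Nonempty M] (Ah : B → M → S → ℝ) (i : B) (k : S) : ℝ :=
  Finset.univ.sup' Finset.univ_nonempty fun j => Ah i j k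

/-- The two-sided matching `μ*` induced by a matching `μ` of the market with middlemen:
keep all matched buyer–seller pairs (dropping the middlemen). -/
def star (f : MMatch B M S) : B → Option S := fun i => (f i).map Prod.snd

/-- `m(i,k)`: the lowest-indexed middleman `j` maximizing `â_{ijk}`. -/
def bestMid [Nonempty M] [LinearOrder M] (Ah : B → M → S → ℝ) (i : B) (k : S) : M :=
  (Finset.univ.filter fun j => ∀ j' : M, Ah i j' k ≤ Ah i j k).min' (by
    obtain ⟨j, -, hj⟩ := Finset.exists_max_image (Finset.univ : Finset M)
      (fun j => Ah i j k) Finset.univ_nonempty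
    exact ⟨j, Finset.mem_filter.mpr ⟨Finset.mem_univ _, fun j' => hj j' (Finset.mem_univ _)⟩⟩)

/-- The matching `σ^△` of the market with middlemen induced by a two-sided matching `σ`:
each matched pair `{i,k}` of `σ` trades through the best middleman `m(i,k)`
(and every other middleman is a singleton). -/
def triangle [Nonempty M] [LinearOrder M] (Ah : B → M → S → ℝ) (g : B → Option S) :
    MMatch B M S :=
  fun i => (g i).map fun k => (some (bestMid Ah i k), k)

/-- The core of a TU game on the finite player set `P`. -/
def core {P : Type*} [Fintype P] (v : Finset P → ℝ) : Set (P → ℝ) :=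
  { x | ∑ t, x t = v Finset.univ ∧ ∀ T : Finset P, v T ≤ ∑ t ∈ T, x t }

/-- Augment a payoff vector of the two-sided market with zero payoffs to all middlemen. -/
def aug (xz : B ⊕ S → ℝ) : Player B M S → ℝ := fun t =>
  match t with
  | Sum.inl i => xz (Sum.inl i)
  | Sum.inr (Sum.inl _) => 0
  | Sum.inr (Sum.inr k) => xz (Sum.inr k)

/-- Restrict a payoff vector of the market with middlemen to the buyers and sellers. -/
def restrictBS (X : Player B M S → ℝ) : B ⊕ S → ℝ := fun t =>
  match t with
  | Sum.inl i => X (buyer i)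
  | Sum.inr k => X (seller k)

/-- The set `T ∩ (B ∪ S)` of buyers and sellers of a coalition `T`. -/
def bsPart (T : Finset (Player B M S)) : Finset (B ⊕ S) :=
  Finset.univ.filter fun t =>
    match t with
    | Sum.inl i => buyer i ∈ T
    | Sum.inr k => (seller k : Player B M S) ∈ T

/-- The coalition `R ∪ M` consisting of the buyers and sellers of `R` together with
all middlemen. -/
def withAllMid (R : Finset (B ⊕ S)) : Finset (Player B M S) :=
  Finset.univ.filter fun t =>
    match t with
    | Sum.inl i => Sum.inl i ∈ R
    | Sum.inr (Sum.inl _) => True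
    | Sum.inr (Sum.inr k) => Sum.inr k ∈ R

end Middlemen

namespace Middlemen

theorem bestMid_spec {B M S : Type*} [Fintype M] [Nonempty M] [LinearOrder M]
    (Ah : B → M → S → ℝ) (i : B) (k : S) : Ah i (bestMid Ah i k) k = Astar Ah i k := by
  have h : ∀ j' : M, Ah i j' k ≤ Ah i (bestMid Ah i k) k :=
    (Finset.mem_filter.mp (Finset.min'_mem
      (Finset.univ.filter fun j => ∀ j' : M, Ah i j' k ≤ Ah i j k) _)).2
  apply le_antisymm
  · exact Finset.le_sup' (fun j => Ah i j k) (Finset.mem_univ _)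
  · exact Finset.sup'_le _ _ (fun j _ => h j)

/-- if `σ` is an optimal matching of the associated two-sided assignment
market `γ*`, then `σ^△` is an optimal matching of the market with middlemen `γ`. -/
theorem triangle_optimal
    {B M S : Type*} [Fintype B] [Fintype M] [Fintype S]
    [Nonempty B] [Nonempty M] [Nonempty S] [LinearOrder M]
    (A : B → S → ℝ) (Ah : B → M → S → ℝ)
    (hA : ∀ i k, 0 ≤ A i k) (hAh : ∀ i j k, A i k ≤ Ah i j k)
    (g : B → Option S) (hg : IsMatching2 Finset.univ g)
    (hopt : m2val (Astar Ah) g = wGame (Astar Ah) Finset.univ) :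
    IsMatching Finset.univ (triangle Ah g) ∧
      mval A Ah (triangle Ah g) = vGame A Ah Finset.univ := by
  have hM : IsMatching Finset.univ (triangle Ah g) := by
    refine ⟨fun i o k _ => ⟨Finset.mem_univ _, Finset.mem_univ _, fun j _ => Finset.mem_univ _⟩, ?_⟩
    intro i i' o o' k h h'
    simp only [triangle, Option.map_eq_some_iff, Prod.mk.injEq] at h h'
    obtain ⟨a, ha, -, rfl⟩ := h
    obtain ⟨b, hb, -, rfl⟩ := h'
    exact hg.2 i i' _ ha hb
  have hval : mval A Ah (triangle Ah g) = m2val (Astar Ah) g := by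
    unfold mval m2val
    refine Finset.sum_congr rfl fun i _ => ?_
    cases hgi : g i with
    | none => simp [triangle, hgi]
    | some k => simp [triangle, hgi, bestMid_spec]
  have hub : ∀ f : MMatch B M S, IsMatching Finset.univ f →
      mval A Ah f ≤ mval A Ah (triangle Ah g) := by
    intro f hf
    have h1 : mval A Ah f ≤ m2val (Astar Ah) (star f) := by
      unfold mval m2val
      refine Finset.sum_le_sum fun i _ => ?_
      have hle : ∀ j k, Ah i j k ≤ Astar Ah i k := fun j k =>
        Finset.le_sup' (fun j => Ah i j k) (Finset.mem_univ j)
      rcases hfi : f i with _ | ⟨_ | j, k⟩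
      · simp [star, hfi]
      · simpa [star, hfi] using (hAh i (Classical.arbitrary M) k).trans (hle _ k)
      · simpa [star, hfi] using hle j k
    have h2 : IsMatching2 Finset.univ (star f) := by
      refine ⟨fun i k _ => ⟨Finset.mem_univ _, Finset.mem_univ _⟩, ?_⟩
      intro i i' k h h'
      simp only [star, Option.map_eq_some_iff] at h h'
      obtain ⟨⟨o, a⟩, ha, rfl⟩ := h
      obtain ⟨⟨o', b⟩, hb, hab⟩ := h'
      simp only at hab
      subst hab
      exact hf.2 i i' _ _ _ ha hb
    have hbdd : BddAbove { r | ∃ g : B → Option S, IsMatching2 Finset.univ g ∧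
        r = m2val (Astar Ah) g } := by
      refine ((Set.finite_range (m2val (Astar Ah))).subset ?_).bddAbove
      rintro r ⟨g, -, rfl⟩
      exact ⟨g, rfl⟩
    rw [hval, hopt]
    exact h1.trans (le_csSup hbdd ⟨_, h2, rfl⟩)
  refine ⟨hM, ?_⟩
  have hG : IsGreatest { r | ∃ f : MMatch B M S, IsMatching Finset.univ f ∧ r = mval A Ah f }
      (mval A Ah (triangle Ah g)) := by
    refine ⟨⟨_, hM, rfl⟩, ?_⟩
    rintro r ⟨f, hf, rfl⟩
    exact hub f hf
  exact hG.csSup_eq.symm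

end Middlemen
end
end

section
/- Let γ=(B,M,S,A,Â) be a market with middlemen and γ*=(B,S,A*) the associated two-sided assignment market. If μ is an optimal matching for γ (i.e. its value attains v_γ(N)), then the induced matching μ* is an optimal matching for γ* (i.e. its value attains w_{γ*}(B∪S)). -/
/-!
Matching markets with middlemen (Atay, Bahel, Solymosi).

Players are of three sorts: buyers `B`, middlemen `M`, sellers `S`
(three disjoint nonempty finite types); the player set is `Player B M S = B ⊕ M ⊕ S`.
An (functional representation of a) `T`-matching assigns to each buyer either nothing
(the buyer is single), a seller (direct trade), or a middleman together with a seller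
(mediated trade); distinct buyers get distinct sellers, and all agents involved lie in `T`.
A middleman may mediate several trades.
-/

open scoped Classical

noncomputable section

namespace Middlemen

/-- if `μ` is an optimal matching of the market with middlemen `γ`, then
`μ*` is an optimal matching of the associated two-sided assignment market `γ*`. -/
theorem star_optimal
    {B M S : Type*} [Fintype B] [Fintype M] [Fintype S]
    [Nonempty B] [Nonempty M] [Nonempty S]
    (A : B → S → ℝ) (Ah : B → M → S → ℝ)
    (hA : ∀ i k, 0 ≤ A i k) (hAh : ∀ i j k, A i k ≤ Ah i j k)
    (f : MMatch B M S) (hf : IsMatching Finset.univ f)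
    (hopt : mval A Ah f = vGame A Ah Finset.univ) :
    IsMatching2 Finset.univ (star f) ∧
      m2val (Astar Ah) (star f) = wGame (Astar Ah) Finset.univ := by
  have hstar : IsMatching2 Finset.univ (star f) := by
    refine ⟨fun i k _ => ⟨Finset.mem_univ _, Finset.mem_univ _⟩, ?_⟩
    intro i i' k h h'
    simp only [star, Option.map_eq_some_iff] at h h'
    obtain ⟨⟨o, k1⟩, h1, rfl⟩ := h
    obtain ⟨⟨o', k2⟩, h2, h3⟩ := h'
    simp only at h3
    subst h3
    exact hf.2 i i' o o' _ h1 h2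
  refine ⟨hstar, ?_⟩
  have hle : ∀ i j k, Ah i j k ≤ Astar Ah i k := fun i j k =>
    Finset.le_sup' (fun j => Ah i j k) (Finset.mem_univ j)
  have hex : ∀ i k, ∃ j, Astar Ah i k = Ah i j k := by
    intro i k
    obtain ⟨j, -, hj⟩ := Finset.exists_mem_eq_sup' Finset.univ_nonempty
      (fun j : M => Ah i j k)
    exact ⟨j, hj⟩
  choose m hm using hex
  have h1 : mval A Ah f ≤ m2val (Astar Ah) (star f) := by
    unfold mval m2val star
    apply Finset.sum_le_sum
    intro i _
    rcases f i with _ | ⟨_ | j, k⟩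
    · simp
    · obtain ⟨j⟩ := ‹Nonempty M›
      exact (hAh i j k).trans (hle i j k)
    · exact hle i j k
  have hb : BddAbove { r | ∃ f : MMatch B M S, IsMatching Finset.univ f ∧ r = mval A Ah f } := by
    apply Set.Finite.bddAbove
    refine (Set.finite_range (fun f : MMatch B M S => mval A Ah f)).subset ?_
    rintro r ⟨f, -, rfl⟩
    exact ⟨f, rfl⟩
  have h2 : ∀ g : B → Option S, IsMatching2 Finset.univ g →
      m2val (Astar Ah) g ≤ mval A Ah f := by
    intro g hg
    rw [hopt]
    apply le_csSup hb
    refine ⟨fun i => (g i).map fun k => (some (m i k), k), ⟨?_, ?_⟩, ?_⟩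
    · intro i o k _
      exact ⟨Finset.mem_univ _, Finset.mem_univ _, fun _ _ => Finset.mem_univ _⟩
    · intro i i' o o' k h h'
      simp only [Option.map_eq_some_iff, Prod.mk.injEq] at h h'
      obtain ⟨k1, h1, -, rfl⟩ := h
      obtain ⟨k2, h2, -, rfl⟩ := h'
      exact hg.2 i i' _ h1 h2
    · unfold mval m2val
      apply Finset.sum_congr rfl
      intro i _
      beta_reduce
      rcases g i with _ | k
      · rfl
      · exact hm i k
  symm
  apply IsGreatest.csSup_eq
  refine ⟨⟨_, hstar, rfl⟩, ?_⟩
  rintro r ⟨g, hg, rfl⟩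
  exact (h2 g hg).trans h1

end Middlemen
end
end

section
/- Let γ=(B,M,S,A,Â) be a market with middlemen and γ*=(B,S,A*) the associated two-sided assignment market. Then the optimum values of the two markets coincide: v_γ(N) = w_{γ*}(B∪S). -/
/-!
Matching markets with middlemen (Atay, Bahel, Solymosi).

Players are of three sorts: buyers `B`, middlemen `M`, sellers `S`
(three disjoint nonempty finite types); the player set is `Player B M S = B ⊕ M ⊕ S`.
An (functional representation of a) `T`-matching assigns to each buyer either nothing
(the buyer is single), a seller (direct trade), or a middleman together with a seller
(mediated trade); distinct buyers get distinct sellers, and all agents involved lie in `T`.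
A middleman may mediate several trades.
-/

open scoped Classical

noncomputable section

namespace Middlemen

/-- the optimum values of the market with middlemen and of the associated
two-sided assignment market coincide: `v_γ(N) = w_γ*(B ∪ S)`. -/
theorem vGame_univ_eq_wGame_univ
    {B M S : Type*} [Fintype B] [Fintype M] [Fintype S]
    [Nonempty B] [Nonempty M] [Nonempty S]
    (A : B → S → ℝ) (Ah : B → M → S → ℝ)
    (hA : ∀ i k, 0 ≤ A i k) (hAh : ∀ i j k, A i k ≤ Ah i j k) :
    vGame A Ah Finset.univ = wGame (Astar Ah) Finset.univ := by
  have bdd1 : BddAbove { r | ∃ f : MMatch B M S, IsMatching Finset.univ f ∧ r = mval A Ah f } := by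
    refine ((Set.finite_range (mval A Ah)).subset ?_).bddAbove
    rintro r ⟨f, -, rfl⟩
    exact ⟨f, rfl⟩
  have bdd2 : BddAbove { r | ∃ g : B → Option S, IsMatching2 Finset.univ g ∧
      r = m2val (Astar Ah) g } := by
    refine ((Set.finite_range (m2val (Astar Ah))).subset ?_).bddAbove
    rintro r ⟨f, -, rfl⟩
    exact ⟨f, rfl⟩
  have hle : ∀ i j k, Ah i j k ≤ Astar Ah i k := fun i j k =>
    Finset.le_sup' (fun j => Ah i j k) (Finset.mem_univ j)
  have hex : ∀ i k, ∃ j, Astar Ah i k = Ah i j k := fun i k => by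
    obtain ⟨j, -, hj⟩ := Finset.exists_mem_eq_sup' (Finset.univ_nonempty (α := M))
      (fun j => Ah i j k)
    exact ⟨j, hj⟩
  choose b hb using hex
  apply le_antisymm
  · refine csSup_le ⟨_, fun _ => none, ⟨by simp, by simp⟩, rfl⟩ ?_
    rintro r ⟨f, ⟨-, hf⟩, rfl⟩
    refine le_csSup_of_le bdd2 ⟨star f, ⟨by simp, ?_⟩, rfl⟩ ?_
    · intro i i' k h h'
      simp only [star, Option.map_eq_some_iff] at h h'
      obtain ⟨⟨o, k1⟩, h, rfl⟩ := h
      obtain ⟨⟨o', k2⟩, h', h2⟩ := h'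
      simp only at h2
      subst h2
      exact hf _ _ _ _ _ h h'
    · refine Finset.sum_le_sum fun i _ => ?_
      rcases h : f i with _ | ⟨_ | j, k⟩
      · simp [star, h]
      · simpa [star, h] using (hAh i (Classical.arbitrary M) k).trans (hle _ _ _)
      · simpa [star, h] using hle i j k
  · refine csSup_le ⟨_, fun _ => none, ⟨by simp, by simp⟩, rfl⟩ ?_
    rintro r ⟨g, ⟨-, hg⟩, rfl⟩
    refine le_csSup_of_le bdd1
      ⟨fun i => (g i).map fun k => (some (b i k), k), ⟨by simp, ?_⟩, rfl⟩ ?_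
    · intro i i' o o' k h h'
      simp only [Option.map_eq_some_iff, Prod.mk.injEq] at h h'
      obtain ⟨k1, h, -, rfl⟩ := h
      obtain ⟨k2, h', -, rfl⟩ := h'
      exact hg _ _ _ h h'
    · refine Finset.sum_le_sum fun i _ => ?_
      rcases h : g i with _ | k
      · simp [h]
      · simpa [h] using (hb i k).le

end Middlemen
end
end

section
/- Let γ=(B,M,S,A,Â) be a market with middlemen and γ*=(B,S,A*) the associated two-sided assignment market. For every coalition T⊆N, the worth of T in the middlemen market game is bounded above by the worth of its buyers and sellers in the associated assignment game: v_γ(T) ≤ w_{γ*}(T∩(B∪S)). -/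
/-!
Matching markets with middlemen (Atay, Bahel, Solymosi).

Players are of three sorts: buyers `B`, middlemen `M`, sellers `S`
(three disjoint nonempty finite types); the player set is `Player B M S = B ⊕ M ⊕ S`.
An (functional representation of a) `T`-matching assigns to each buyer either nothing
(the buyer is single), a seller (direct trade), or a middleman together with a seller
(mediated trade); distinct buyers get distinct sellers, and all agents involved lie in `T`.
A middleman may mediate several trades.
-/

open scoped Classical

noncomputable section

namespace Middlemen

/-- for every coalition `T`, `v_γ(T) ≤ w_γ*(T ∩ (B ∪ S))`. -/
theorem vGame_le_wGame_bsPart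
    {B M S : Type*} [Fintype B] [Fintype M] [Fintype S]
    [Nonempty B] [Nonempty M] [Nonempty S]
    (A : B → S → ℝ) (Ah : B → M → S → ℝ)
    (hA : ∀ i k, 0 ≤ A i k) (hAh : ∀ i j k, A i k ≤ Ah i j k) :
    ∀ T : Finset (Player B M S), vGame A Ah T ≤ wGame (Astar Ah) (bsPart T) := by
  intro T
  have hset : { r | ∃ f : MMatch B M S, IsMatching T f ∧ r = mval A Ah f }.Nonempty :=
    ⟨_, fun _ => none, ⟨by simp, by simp⟩, rfl⟩
  unfold vGame wGame
  refine csSup_le hset ?_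
  rintro r ⟨f, ⟨hf1, hf2⟩, rfl⟩
  have hbdd : BddAbove { r | ∃ g : B → Option S,
      IsMatching2 (bsPart T) g ∧ r = m2val (Astar Ah) g } := by
    refine ((Set.finite_range (fun g : B → Option S => m2val (Astar Ah) g)).subset ?_).bddAbove
    rintro r ⟨g, -, rfl⟩
    exact ⟨g, rfl⟩
  have hle : ∀ i j k, Ah i j k ≤ Astar Ah i k := fun i j k =>
    Finset.le_sup' (fun j => Ah i j k) (Finset.mem_univ j)
  have hmem : IsMatching2 (bsPart T) (star f) := by
    constructor
    · intro i k h
      obtain ⟨⟨o, k'⟩, h1, rfl⟩ := Option.map_eq_some_iff.mp h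
      obtain ⟨h2, h3, -⟩ := hf1 _ _ _ h1
      exact ⟨by simpa [bsPart] using h2, by simpa [bsPart] using h3⟩
    · intro i i' k h h'
      obtain ⟨⟨o, k1⟩, h1, rfl⟩ := Option.map_eq_some_iff.mp h
      obtain ⟨⟨o', k2⟩, h2, h3⟩ := Option.map_eq_some_iff.mp h'
      dsimp only at h3
      subst h3
      exact hf2 _ _ _ _ _ h1 h2
  refine le_trans ?_ (le_csSup hbdd ⟨star f, hmem, rfl⟩)
  unfold mval m2val
  refine Finset.sum_le_sum fun i _ => ?_
  simp only [star]
  rcases f i with _ | ⟨_ | j, k⟩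
  · simp
  · exact (hAh i (Classical.arbitrary M) k).trans (hle _ _ _)
  · exact hle _ _ _

end Middlemen
end
end

section
/- Let γ=(B,M,S,A,Â) be a market with middlemen and γ*=(B,S,A*) the associated two-sided assignment market. For every coalition R⊆B∪S of buyers and sellers, w_{γ*}(R) = v_γ(R∪M); that is, the worth of R in the assignment game γ* equals the worth, in the middlemen market game, of the coalition consisting of R together with all middlemen. -/
/-!
Matching markets with middlemen (Atay, Bahel, Solymosi).

Players are of three sorts: buyers `B`, middlemen `M`, sellers `S`
(three disjoint nonempty finite types); the player set is `Player B M S = B ⊕ M ⊕ S`.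
An (functional representation of a) `T`-matching assigns to each buyer either nothing
(the buyer is single), a seller (direct trade), or a middleman together with a seller
(mediated trade); distinct buyers get distinct sellers, and all agents involved lie in `T`.
A middleman may mediate several trades.
-/

open scoped Classical

noncomputable section

namespace Middlemen

/-- for every coalition `R` of buyers and sellers,
`w_γ*(R) = v_γ(R ∪ M)`. -/
theorem wGame_eq_vGame_withAllMid
    {B M S : Type*} [Fintype B] [Fintype M] [Fintype S]
    [Nonempty B] [Nonempty M] [Nonempty S]
    (A : B → S → ℝ) (Ah : B → M → S → ℝ)
    (hA : ∀ i k, 0 ≤ A i k) (hAh : ∀ i j k, A i k ≤ Ah i j k) :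
    ∀ R : Finset (B ⊕ S), wGame (Astar Ah) R = vGame A Ah (withAllMid R) := by
  intro R
  have hex : ∀ i k, ∃ j, Astar Ah i k = Ah i j k := by
    intro i k
    obtain ⟨j, -, hj⟩ := Finset.exists_mem_eq_sup' (Finset.univ_nonempty (α := M))
      (fun j => Ah i j k)
    exact ⟨j, hj⟩
  choose m hm using hex
  have hle : ∀ i j k, Ah i j k ≤ Astar Ah i k := fun i j k =>
    Finset.le_sup' (fun j => Ah i j k) (Finset.mem_univ j)
  unfold wGame vGame
  apply le_antisymm
  · apply csSup_le
    · exact ⟨_, fun _ => none, ⟨by simp, by simp⟩, rfl⟩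
    · rintro r ⟨g, ⟨hg1, hg2⟩, rfl⟩
      apply le_csSup
      · refine ((Set.finite_range (fun f : MMatch B M S => mval A Ah f)).subset ?_).bddAbove
        rintro r ⟨f, -, rfl⟩
        exact ⟨f, rfl⟩
      · refine ⟨fun i => (g i).map fun k => (some (m i k), k), ⟨?_, ?_⟩, ?_⟩
        · intro i o k h
          rw [Option.map_eq_some_iff] at h
          obtain ⟨k', hk, he⟩ := h
          obtain ⟨-, rfl⟩ := Prod.mk.inj he
          have := hg1 i k' hk
          simp [withAllMid, buyer, seller, mid, this]
        · intro i i' o o' k h h'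
          rw [Option.map_eq_some_iff] at h h'
          obtain ⟨k1, hk, he⟩ := h
          obtain ⟨k2, hk', he'⟩ := h'
          obtain ⟨-, rfl⟩ := Prod.mk.inj he
          obtain ⟨-, rfl⟩ := Prod.mk.inj he'
          exact hg2 _ _ _ hk hk'
        · unfold m2val mval
          apply Finset.sum_congr rfl
          intro i _
          cases h : g i <;> simp [hm, h]
  · apply csSup_le
    · exact ⟨_, fun _ => none, ⟨by simp, by simp⟩, rfl⟩
    · rintro r ⟨f, ⟨hf1, hf2⟩, rfl⟩
      refine le_csSup_of_le (b := m2val (Astar Ah) (star f)) ?_ ⟨star f, ⟨?_, ?_⟩, rfl⟩ ?_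
      · refine ((Set.finite_range (fun g : B → Option S => m2val (Astar Ah) g)).subset ?_).bddAbove
        rintro r ⟨f, -, rfl⟩
        exact ⟨f, rfl⟩
      · intro i k h
        obtain ⟨⟨o, k'⟩, hk, rfl⟩ := Option.map_eq_some_iff.1 h
        have := hf1 i o k' hk
        simp [withAllMid, buyer, seller] at this
        exact ⟨this.1, this.2.1⟩
      · intro i i' k h h'
        obtain ⟨⟨o, k1⟩, hk, rfl⟩ := Option.map_eq_some_iff.1 h
        obtain ⟨⟨o', k2⟩, hk', he⟩ := Option.map_eq_some_iff.1 h'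
        obtain rfl : k2 = k1 := he
        exact hf2 _ _ _ _ _ hk hk'
      · unfold m2val mval
        apply Finset.sum_le_sum
        intro i _
        rcases h : f i with _ | ⟨_ | j, k⟩
        · simp [star, h]
        · simpa [star, h] using (hAh i (m i k) k).trans (hle _ _ _)
        · simpa [star, h] using hle i j k

end Middlemen
end
end

section
/- Let γ=(B,M,S,A,Â) be a market with middlemen and γ*=(B,S,A*) the associated two-sided assignment market. If (x;z)∈Core(w_{γ*}), then the augmented payoff vector (x;0;z)∈R^B×R^M×R^S, which gives every middleman payoff zero, belongs to Core(v_γ). -/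
/-!
Matching markets with middlemen (Atay, Bahel, Solymosi).

Players are of three sorts: buyers `B`, middlemen `M`, sellers `S`
(three disjoint nonempty finite types); the player set is `Player B M S = B ⊕ M ⊕ S`.
An (functional representation of a) `T`-matching assigns to each buyer either nothing
(the buyer is single), a seller (direct trade), or a middleman together with a seller
(mediated trade); distinct buyers get distinct sellers, and all agents involved lie in `T`.
A middleman may mediate several trades.
-/

open scoped Classical

noncomputable section

namespace Middlemen

theorem bdd_v {B M S : Type*} [Fintype B] [Fintype M] [Fintype S]
    (A : B → S → ℝ) (Ah : B → M → S → ℝ) (T : Finset (Player B M S)) :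
    BddAbove { r | ∃ f : MMatch B M S, IsMatching T f ∧ r = mval A Ah f } := by
  refine ((Set.finite_range (mval A Ah)).subset ?_).bddAbove
  rintro r ⟨f, -, rfl⟩
  exact ⟨f, rfl⟩

theorem bdd_w {B S : Type*} [Fintype B] [Fintype S]
    (As : B → S → ℝ) (R : Finset (B ⊕ S)) :
    BddAbove { r | ∃ g : B → Option S, IsMatching2 R g ∧ r = m2val As g } := by
  refine ((Set.finite_range (m2val As)).subset ?_).bddAbove
  rintro r ⟨f, -, rfl⟩
  exact ⟨f, rfl⟩

theorem v_le_w {B M S : Type*} [Fintype B] [Fintype M] [Fintype S] [Nonempty M]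
    (A : B → S → ℝ) (Ah : B → M → S → ℝ) (hAh : ∀ i j k, A i k ≤ Ah i j k)
    (T : Finset (Player B M S)) :
    vGame A Ah T ≤ wGame (Astar Ah) (bsPart T) := by
  have hle : ∀ i j k, Ah i j k ≤ Astar Ah i k := fun i j k =>
    Finset.le_sup' (fun j => Ah i j k) (Finset.mem_univ j)
  refine csSup_le ⟨_, fun _ => none, ⟨by simp, by simp⟩, rfl⟩ ?_
  rintro r ⟨f, ⟨h1, h2⟩, rfl⟩
  refine le_trans ?_ (le_csSup (bdd_w _ _) ⟨star f, ⟨?_, ?_⟩, rfl⟩)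
  · refine Finset.sum_le_sum fun i _ => ?_
    rcases h : f i with _ | ⟨_ | j, k⟩
    · simp [star, h]
    · simp only [star, h, Option.map_some]
      exact (hAh i (Classical.arbitrary M) k).trans (hle _ _ _)
    · simp only [star, h, Option.map_some]
      exact hle _ _ _
  · intro i k h
    simp only [star, Option.map_eq_some_iff] at h
    obtain ⟨⟨o, k'⟩, h, rfl⟩ := h
    have := h1 i o k' h
    simp [bsPart, this.1, this.2.1]
  · intro i i' k h h'
    simp only [star, Option.map_eq_some_iff] at h h'
    obtain ⟨⟨o, k1⟩, h, rfl⟩ := h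
    obtain ⟨⟨o', k2⟩, h', rfl⟩ := h'
    exact h2 _ _ _ _ _ h h'

theorem w_le_v {B M S : Type*} [Fintype B] [Fintype M] [Fintype S] [Nonempty M]
    (A : B → S → ℝ) (Ah : B → M → S → ℝ) :
    wGame (Astar Ah) Finset.univ ≤ vGame A Ah Finset.univ := by
  have hex : ∀ i k, ∃ j, Astar Ah i k = Ah i j k := fun i k => by
    obtain ⟨j, -, hj⟩ := Finset.exists_mem_eq_sup' (Finset.univ_nonempty (α := M))
      (fun j => Ah i j k)
    exact ⟨j, hj⟩
  choose m hm using hex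
  refine csSup_le ⟨_, fun _ => none, ⟨by simp, by simp⟩, rfl⟩ ?_
  rintro r ⟨g, ⟨h1, h2⟩, rfl⟩
  refine le_trans ?_ (le_csSup (bdd_v _ _ _)
    ⟨fun i => (g i).map fun k => (some (m i k), k), ⟨by simp, ?_⟩, rfl⟩)
  · refine Finset.sum_le_sum fun i _ => ?_
    rcases h : g i with _ | k
    · simp [h]
    · simp [hm, h]
  · intro i i' o o' k h h'
    simp only [Option.map_eq_some_iff, Prod.mk.injEq] at h h'
    obtain ⟨k1, h, -, rfl⟩ := h
    obtain ⟨k2, h', -, rfl⟩ := h'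
    exact h2 _ _ _ h h'

theorem sum_aug {B M S : Type*} [Fintype B] [Fintype M] [Fintype S]
    (xz : B ⊕ S → ℝ) (T : Finset (Player B M S)) :
    ∑ t ∈ T, aug xz t = ∑ t ∈ bsPart T, xz t := by
  have : ∑ t ∈ T, aug xz t = ∑ t, if t ∈ T then aug xz t else 0 := by simp
  rw [this, bsPart, Finset.sum_filter]
  simp only [Fintype.sum_sum_type, aug, buyer, seller]
  simp
  congr 1
  · refine Finset.sum_congr rfl fun x _ => ?_
    by_cases hx : (Sum.inl x : Player B M S) ∈ T
    · exact (if_pos hx).trans (if_pos hx).symm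
    · exact (if_neg hx).trans (if_neg hx).symm
  · refine Finset.sum_congr rfl fun x _ => ?_
    by_cases hx : (Sum.inr (Sum.inr x) : Player B M S) ∈ T
    · exact (if_pos hx).trans (if_pos hx).symm
    · exact (if_neg hx).trans (if_neg hx).symm

/-- if `(x;z)` is in the core of the assignment game `w_γ*`, then the
augmented payoff vector `(x;0;z)` (zero payoff to every middleman) is in the core of
the middlemen market game `v_γ`. -/
theorem aug_mem_core
    {B M S : Type*} [Fintype B] [Fintype M] [Fintype S]
    [Nonempty B] [Nonempty M] [Nonempty S]
    (A : B → S → ℝ) (Ah : B → M → S → ℝ)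
    (hA : ∀ i k, 0 ≤ A i k) (hAh : ∀ i j k, A i k ≤ Ah i j k)
    (xz : B ⊕ S → ℝ) (hxz : xz ∈ core (wGame (Astar Ah))) :
    (aug xz : Player B M S → ℝ) ∈ core (vGame A Ah) := by
  have hu : bsPart (Finset.univ : Finset (Player B M S)) = Finset.univ := by
    ext t
    rcases t with i | k <;> simp [bsPart]
  obtain ⟨h1, h2⟩ := hxz
  refine ⟨?_, fun T => ?_⟩
  · rw [sum_aug, hu, h1]
    refine le_antisymm (w_le_v A Ah) ?_
    have := v_le_w A Ah hAh Finset.univ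
    rwa [hu] at this
  · rw [sum_aug]
    exact (v_le_w A Ah hAh T).trans (h2 _)

end Middlemen
end
end

section
/- Let γ=(B,M,S,A,Â) be a market with middlemen and γ*=(B,S,A*) the associated two-sided assignment market. If (x;0;z)∈Core(v_γ) is a core allocation giving every middleman payoff zero, then the restricted payoff vector (x;z)∈R^B×R^S belongs to Core(w_{γ*}). -/
/-!
Matching markets with middlemen (Atay, Bahel, Solymosi).

Players are of three sorts: buyers `B`, middlemen `M`, sellers `S`
(three disjoint nonempty finite types); the player set is `Player B M S = B ⊕ M ⊕ S`.
An (functional representation of a) `T`-matching assigns to each buyer either nothing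
(the buyer is single), a seller (direct trade), or a middleman together with a seller
(mediated trade); distinct buyers get distinct sellers, and all agents involved lie in `T`.
A middleman may mediate several trades.
-/

open scoped Classical

noncomputable section

namespace Middlemen

/-- worth comparison -/
theorem aux_w_le {B M S : Type*} [Fintype B] [Fintype M] [Fintype S] [Nonempty M]
    (A : B → S → ℝ) (Ah : B → M → S → ℝ) (R : Finset (B ⊕ S)) :
    wGame (Astar Ah) R ≤ vGame A Ah (withAllMid R) := by
  have hj : ∀ i k, ∃ j, Astar Ah i k = Ah i j k := fun i k => by
    obtain ⟨j, -, hj⟩ := Finset.exists_mem_eq_sup' (Finset.univ_nonempty (α := M))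
      (fun j => Ah i j k)
    exact ⟨j, hj⟩
  choose m hm using hj
  apply csSup_le
  · exact ⟨_, fun _ => none, ⟨by simp, by simp⟩, rfl⟩
  · rintro r ⟨g, ⟨h1, h2⟩, rfl⟩
    apply le_csSup
    · apply Set.Finite.bddAbove
      apply (Set.finite_range (mval A Ah)).subset
      rintro _ ⟨f, _, rfl⟩
      exact ⟨f, rfl⟩
    · refine ⟨fun i => (g i).map fun k => (some (m i k), k), ⟨?_, ?_⟩, ?_⟩
      · intro i o k h
        simp only [Option.map_eq_some_iff, Prod.mk.injEq] at h
        obtain ⟨k', hk, -, rfl⟩ := h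
        have := h1 i k' hk
        simp [withAllMid, buyer, seller, mid, this]
      · intro i i' o o' k h h'
        simp only [Option.map_eq_some_iff, Prod.mk.injEq] at h h'
        obtain ⟨k', hk, -, rfl⟩ := h
        obtain ⟨k'', hk', -, rfl⟩ := h'
        exact h2 _ _ _ hk hk'
      · unfold m2val mval
        refine Finset.sum_congr rfl fun i _ => ?_
        cases h : g i <;> simp [hm, h]

/-- worth comparison at the grand coalition -/
theorem aux_v_le {B M S : Type*} [Fintype B] [Fintype M] [Fintype S] [Nonempty M]
    (A : B → S → ℝ) (Ah : B → M → S → ℝ) (hAh : ∀ i j k, A i k ≤ Ah i j k) :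
    vGame A Ah Finset.univ ≤ wGame (Astar Ah) Finset.univ := by
  have hle : ∀ i j k, Ah i j k ≤ Astar Ah i k := fun i j k =>
    Finset.le_sup' (fun j => Ah i j k) (Finset.mem_univ j)
  apply csSup_le
  · exact ⟨_, fun _ => none, ⟨by simp, by simp⟩, rfl⟩
  · rintro r ⟨f, ⟨h1, h2⟩, rfl⟩
    have : mval A Ah f ≤ m2val (Astar Ah) (star f) := by
      unfold m2val mval
      refine Finset.sum_le_sum fun i _ => ?_
      rcases h : f i with _ | ⟨_ | j, k⟩
      · simp [star, h]
      · simpa [star, h] using (hAh i (Classical.arbitrary M) k).trans (hle _ _ _)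
      · simpa [star, h] using hle i j k
    refine this.trans (le_csSup ?_ ⟨star f, ⟨by simp, ?_⟩, rfl⟩)
    · apply Set.Finite.bddAbove
      apply (Set.finite_range (m2val (Astar Ah))).subset
      rintro _ ⟨f, _, rfl⟩
      exact ⟨f, rfl⟩
    · intro i i' k h h'
      simp only [star, Option.map_eq_some_iff] at h h'
      obtain ⟨⟨o, k'⟩, hk, rfl⟩ := h
      obtain ⟨⟨o', k''⟩, hk', h3⟩ := h'
      simp only at h3
      subst h3
      exact h2 _ _ _ _ _ hk hk'

/-- if `(x;0;z)` is a core allocation of `v_γ` giving every middleman zero,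
then its restriction `(x;z)` to the buyers and sellers is in the core of `w_γ*`. -/
theorem restrictBS_mem_core
    {B M S : Type*} [Fintype B] [Fintype M] [Fintype S]
    [Nonempty B] [Nonempty M] [Nonempty S]
    (A : B → S → ℝ) (Ah : B → M → S → ℝ)
    (hA : ∀ i k, 0 ≤ A i k) (hAh : ∀ i j k, A i k ≤ Ah i j k)
    (X : Player B M S → ℝ) (hX : X ∈ core (vGame A Ah))
    (h0 : ∀ j : M, X (mid j) = 0) :
    restrictBS X ∈ core (wGame (Astar Ah)) := by
  obtain ⟨hX1, hX2⟩ := hX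
  have key : ∀ R : Finset (B ⊕ S), ∑ t ∈ withAllMid (M := M) R, X t
      = ∑ t ∈ R, restrictBS X t := by
    intro R
    have h0' : ∀ j : M, X (Sum.inr (Sum.inl j)) = 0 := h0
    have e : R = Finset.univ.filter (· ∈ R) := by simp
    conv_rhs => rw [e]
    rw [withAllMid, Finset.sum_filter, Finset.sum_filter, Fintype.sum_sum_type,
      Fintype.sum_sum_type, Fintype.sum_sum_type]
    simp [h0', restrictBS, buyer, seller]
    congr!
  have hu : withAllMid (M := M) (Finset.univ : Finset (B ⊕ S)) = Finset.univ := by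
    ext t
    rcases t with _ | _ | _ <;> simp [withAllMid]
  have hR : ∀ R, wGame (Astar Ah) R ≤ ∑ t ∈ R, restrictBS X t := fun R =>
    (aux_w_le A Ah R).trans ((hX2 _).trans (key R).le)
  refine ⟨le_antisymm ?_ (hR _), hR⟩
  rw [← key, hu, hX1]
  exact aux_v_le A Ah hAh

end Middlemen
end
end

section
/- Let γ=(B,M,S,A,Â) be a market with middlemen. Then the associated middlemen matching market game v_γ is balanced: Core(v_γ) is nonempty. -/
/-!
Matching markets with middlemen (Atay, Bahel, Solymosi).

Players are of three sorts: buyers `B`, middlemen `M`, sellers `S`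
(three disjoint nonempty finite types); the player set is `Player B M S = B ⊕ M ⊕ S`.
An (functional representation of a) `T`-matching assigns to each buyer either nothing
(the buyer is single), a seller (direct trade), or a middleman together with a seller
(mediated trade); distinct buyers get distinct sellers, and all agents involved lie in `T`.
A middleman may mediate several trades.
-/

open scoped Classical

noncomputable section

namespace Middlemen

theorem box_reduce {P : Type*} [Fintype P] [Nonempty P] (c : P → P → ℝ) (C : ℝ)
    (h0 : ∀ p q, 0 ≤ c p q) (hC : ∀ p q, c p q ≤ C) (u w : P → ℝ)
    (h : ∀ p q, c p q ≤ u p + w q) :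
    ∃ u' w' : P → ℝ, (∀ p, 0 ≤ u' p ∧ u' p ≤ C) ∧ (∀ p, 0 ≤ w' p ∧ w' p ≤ C) ∧
      (∀ p q, c p q ≤ u' p + w' q) ∧ ∑ p, u' p + ∑ p, w' p ≤ ∑ p, u p + ∑ p, w p := by
  obtain ⟨q0, hq0⟩ := Finite.exists_min w
  have hC0 : 0 ≤ C := (h0 q0 q0).trans (hC q0 q0)
  have hu : ∀ p, 0 ≤ u p + w q0 := fun p => (h0 p q0).trans (h p q0)
  have hw : ∀ p, 0 ≤ w p - w q0 := fun p => sub_nonneg.2 (hq0 p)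
  refine ⟨fun p => min (u p + w q0) C, fun p => min (w p - w q0) C,
    fun p => ⟨le_min (hu p) hC0, min_le_right _ _⟩,
    fun p => ⟨le_min (hw p) hC0, min_le_right _ _⟩, ?_, ?_⟩
  · intro p q
    have := h p q
    have := hC p q
    have := hu p
    have := hw q
    simp only
    rcases min_cases (u p + w q0) C with h1 | h1 <;>
    rcases min_cases (w q - w q0) C with h2 | h2 <;> linarith
  · rw [← Finset.sum_add_distrib, ← Finset.sum_add_distrib]
    refine Finset.sum_le_sum fun p _ => ?_
    have := min_le_left (u p + w q0) C
    have := min_le_left (w p - w q0) C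
    linarith

theorem exists_dual {P : Type*} [Fintype P] [Nonempty P] (c : P → P → ℝ)
    (h0 : ∀ p q, 0 ≤ c p q) :
    ∃ (u w : P → ℝ) (σ : P → P), (∀ p, 0 ≤ u p) ∧ (∀ p, 0 ≤ w p) ∧
      (∀ p q, c p q ≤ u p + w q) ∧ Function.Injective σ ∧
      ∑ p, u p + ∑ p, w p = ∑ p, c p (σ p) := by
  obtain ⟨⟨p0, q0⟩, hm⟩ := Finite.exists_max (fun z : P × P => c z.1 z.2)
  have hC : ∀ p q, c p q ≤ c p0 q0 := fun p q => hm (p, q)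
  set C := c p0 q0
  have hC0 : 0 ≤ C := h0 _ _
  let K : Set ((P → ℝ) × (P → ℝ)) :=
    (Set.univ.pi (fun _ => Set.Icc 0 C) ×ˢ Set.univ.pi (fun _ => Set.Icc 0 C)) ∩
      {z | ∀ p q, c p q ≤ z.1 p + z.2 q}
  have hK : IsCompact K := by
    refine IsCompact.inter_right ?_ ?_
    · exact (isCompact_univ_pi fun _ => isCompact_Icc).prod
        (isCompact_univ_pi fun _ => isCompact_Icc)
    · simp only [Set.ofPred_forall]
      refine isClosed_iInter fun p => isClosed_iInter fun q => ?_
      exact isClosed_le (by fun_prop) (by fun_prop)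
  have hne : K.Nonempty := by
    refine ⟨(fun _ => C, fun _ => C), ?_, ?_⟩
    · exact ⟨fun _ _ => ⟨hC0, le_rfl⟩, fun _ _ => ⟨hC0, le_rfl⟩⟩
    · intro p q
      have := hC p q
      simp only
      linarith
  obtain ⟨⟨u, w⟩, hz, hmin⟩ := hK.exists_isMinOn hne
    (f := fun z => ∑ p, z.1 p + ∑ p, z.2 p) (by fun_prop)
  have hu : ∀ p, 0 ≤ u p := fun p => (hz.1.1 p trivial).1
  have hw : ∀ p, 0 ≤ w p := fun p => (hz.1.2 p trivial).1
  have hf : ∀ p q, c p q ≤ u p + w q := hz.2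
  have hglob : ∀ u' w' : P → ℝ, (∀ p q, c p q ≤ u' p + w' q) →
      ∑ p, u p + ∑ p, w p ≤ ∑ p, u' p + ∑ p, w' p := by
    intro u' w' h
    obtain ⟨u1, w1, a1, a2, a3, a4⟩ := box_reduce c C h0 hC u' w' h
    refine le_trans ?_ a4
    exact hmin (show (u1, w1) ∈ K from ⟨⟨fun p _ => a1 p, fun p _ => a2 p⟩, a3⟩)
  have hHall := (Fintype.all_card_le_filter_rel_iff_exists_injective
    (fun p q : P => u p + w q = c p q)).1 (by
      intro X
      by_contra hlt
      push Not at hlt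
      set N : Finset P := Finset.univ.filter fun q => ∃ p ∈ X, u p + w q = c p q with hN
      have hε : ∃ ε : ℝ, 0 < ε ∧ ∀ p q, u p + w q ≠ c p q → ε ≤ u p + w q - c p q := by
        have : ∀ᶠ ε in nhdsWithin (0:ℝ) (Set.Ioi 0),
            ∀ p q, u p + w q ≠ c p q → ε ≤ u p + w q - c p q := by
          refine Filter.eventually_all.2 fun p => Filter.eventually_all.2 fun q => ?_
          by_cases h : u p + w q = c p q
          · simp [h]
          · have : 0 < u p + w q - c p q := sub_pos.2 (lt_of_le_of_ne (hf p q) (Ne.symm h))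
            filter_upwards [Ioo_mem_nhdsGT this] with ε he _
            exact he.2.le
        obtain ⟨ε, h1, h2⟩ := (this.and self_mem_nhdsWithin).exists
        exact ⟨ε, h2, h1⟩
      obtain ⟨ε, hε, hs⟩ := hε
      have := hglob (fun p => u p - if p ∈ X then ε else 0)
        (fun q => w q + if q ∈ N then ε else 0) (by
          intro p q
          have h1 := hf p q
          by_cases hp : p ∈ X <;> by_cases hq : q ∈ N <;> simp only [hp, hq, if_true, if_false]
          · linarith
          · have : u p + w q ≠ c p q := fun h => hq (by simp [hN]; exact ⟨p, hp, h⟩)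
            linarith [hs p q this]
          · linarith
          · linarith)
      simp only [Finset.sum_sub_distrib, Finset.sum_add_distrib, Finset.sum_ite_mem,
        Finset.univ_inter, Finset.sum_const, nsmul_eq_mul] at this
      have h3 : (N.card : ℝ) < X.card := by exact_mod_cast hlt
      nlinarith)
  obtain ⟨σ, hσ, ht⟩ := hHall
  refine ⟨u, w, σ, hu, hw, hf, hσ, ?_⟩
  have hb : Function.Bijective σ := Finite.injective_iff_bijective.1 hσ
  rw [← hb.sum_comp w, ← Finset.sum_add_distrib]
  exact Finset.sum_congr rfl fun p _ => ht p

theorem mval_le {B M S : Type*} [Fintype B] [Fintype M] [Fintype S]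
    (A : B → S → ℝ) (Ah : B → M → S → ℝ) (u : B → ℝ) (w : S → ℝ)
    (hu : ∀ i, 0 ≤ u i) (hw : ∀ k, 0 ≤ w k)
    (h1 : ∀ i k, A i k ≤ u i + w k) (h2 : ∀ i j k, Ah i j k ≤ u i + w k)
    (T : Finset (Player B M S)) (f : MMatch B M S) (hf : IsMatching T f) :
    mval A Ah f ≤ ∑ t ∈ T, (Sum.elim u (Sum.elim (fun _ => 0) w) : Player B M S → ℝ) t := by
  have e : ∑ t ∈ T, (Sum.elim u (Sum.elim (fun _ => 0) w) : Player B M S → ℝ) t =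
      (∑ i, if (buyer i : Player B M S) ∈ T then u i else 0) +
      ∑ k, if (seller k : Player B M S) ∈ T then w k else 0 := by
    rw [← Finset.univ_inter T, ← Finset.sum_ite_mem, Fintype.sum_sum_type, Fintype.sum_sum_type]
    simp [buyer, seller]
  have hk : ∀ k, (∑ i, if ∃ o, f i = some (o, k) then w k else 0) ≤
      if (seller k : Player B M S) ∈ T then w k else 0 := by
    intro k
    by_cases hex : ∃ i o, f i = some (o, k)
    · obtain ⟨i, o, hi⟩ := hex
      rw [Finset.sum_eq_single i, if_pos ⟨o, hi⟩, if_pos (hf.1 i o k hi).2.1]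
      · intro b _ hb
        rw [if_neg]
        rintro ⟨o', ho'⟩
        exact hb (hf.2 _ _ _ _ _ ho' hi)
      · simp
    · rw [Finset.sum_eq_zero]
      · split_ifs
        · exact hw k
        · exact le_rfl
      · intro i _
        rw [if_neg]
        rintro ⟨o, ho⟩
        exact hex ⟨i, o, ho⟩
  rw [e]
  refine le_trans ?_ (add_le_add_right (Finset.sum_le_sum fun k _ => hk k) _)
  rw [Finset.sum_comm, ← Finset.sum_add_distrib]
  refine Finset.sum_le_sum fun i _ => ?_
  rcases hi : f i with _ | ⟨o, k⟩
  · simp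
    split_ifs
    · exact hu i
    · exact le_rfl
  · have := (hf.1 i o k hi).1
    rw [if_pos this]
    have e2 : (∑ k', if ∃ o', some (o, k) = some (o', k') then w k' else 0) = w k := by
      simp
    rw [e2]
    cases o
    · exact h1 i k
    · exact h2 i _ k

/-- the middlemen matching market game `v_γ` is balanced:
its core is nonempty. -/
theorem core_nonempty
    {B M S : Type*} [Fintype B] [Fintype M] [Fintype S]
    [Nonempty B] [Nonempty M] [Nonempty S]
    (A : B → S → ℝ) (Ah : B → M → S → ℝ)
    (hA : ∀ i k, 0 ≤ A i k) (hAh : ∀ i j k, A i k ≤ Ah i j k) :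
    (core (vGame A Ah)).Nonempty := by
  have hm : ∀ i k, ∃ j, ∀ j', Ah i j' k ≤ Ah i j k := fun i k =>
    Finite.exists_max (fun j => Ah i j k)
  choose m hm using hm
  let c : B ⊕ S → B ⊕ S → ℝ := fun p q =>
    Sum.elim (fun i => Sum.elim (fun _ => 0) (fun k => Ah i (m i k) k) q) (fun _ => 0) p
  have h0 : ∀ p q, 0 ≤ c p q := by
    rintro (i | k) (i' | k') <;> simp only [c, Sum.elim_inl, Sum.elim_inr, le_refl]
    exact (hA _ _).trans (hAh _ _ _)
  obtain ⟨u, w, σ, hu, hw, hf, hσ, hsum⟩ := exists_dual c h0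
  have h2 : ∀ i j k, Ah i j k ≤ u (Sum.inl i) + w (Sum.inr k) := fun i j k =>
    (hm i k j).trans (hf (Sum.inl i) (Sum.inr k))
  have h1 : ∀ i k, A i k ≤ u (Sum.inl i) + w (Sum.inr k) := fun i k =>
    (hAh i (m i k) k).trans (h2 _ _ _)
  have hle := mval_le A Ah (fun i => u (Sum.inl i)) (fun k => w (Sum.inr k))
    (fun i => hu _) (fun k => hw _) h1 h2
  set x : Player B M S → ℝ :=
    Sum.elim (fun i => u (Sum.inl i)) (Sum.elim (fun _ => 0) (fun k => w (Sum.inr k))) with hx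
  have hv : ∀ T : Finset (Player B M S), vGame A Ah T ≤ ∑ t ∈ T, x t := by
    intro T
    refine csSup_le ⟨_, fun _ => none, ⟨?_, ?_⟩, rfl⟩ ?_
    · intro i o k h; cases h
    · intro i i' o o' k h; cases h
    · rintro r ⟨f, hf, rfl⟩
      exact hle T f hf
  refine ⟨x, le_antisymm ?_ (hv _), hv⟩
  let f : MMatch B M S := fun i =>
    Sum.elim (fun _ => none) (fun k => some (some (m i k), k)) (σ (Sum.inl i))
  have hfs : ∀ i o k, f i = some (o, k) → σ (Sum.inl i) = Sum.inr k := by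
    intro i o k h
    simp only [f] at h
    rcases hs : σ (Sum.inl i) with b | s
    · simp [hs] at h
    · simp [hs] at h
      rw [h.2]
  have hfm : IsMatching Finset.univ f := by
    refine ⟨fun _ _ _ _ => by simp, fun i i' o o' k h h' => ?_⟩
    exact Sum.inl_injective (hσ ((hfs _ _ _ h).trans (hfs _ _ _ h').symm))
  have hval : mval A Ah f = ∑ p, c p (σ p) := by
    rw [Fintype.sum_sum_type]
    simp only [c, Sum.elim_inl, Sum.elim_inr, Finset.sum_const_zero, add_zero, mval]
    refine Finset.sum_congr rfl fun i _ => ?_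
    simp only [f]
    rcases hs : σ (Sum.inl i) with b | s <;> simp
  have : ∑ t, x t ≤ mval A Ah f := by
    rw [hval, ← hsum, Fintype.sum_sum_type, Fintype.sum_sum_type, Fintype.sum_sum_type,
      Fintype.sum_sum_type]
    simp only [hx, Sum.elim_inl, Sum.elim_inr, Finset.sum_const_zero, zero_add]
    have a1 : 0 ≤ ∑ k : S, u (Sum.inr k) := Finset.sum_nonneg fun _ _ => hu _
    have a2 : 0 ≤ ∑ k : B, w (Sum.inl k) := Finset.sum_nonneg fun _ _ => hw _
    linarith
  refine this.trans (le_csSup ⟨∑ t, x t, ?_⟩ ⟨f, hfm, rfl⟩)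
  rintro r ⟨g, hg, rfl⟩
  exact hle _ g hg

end Middlemen
end
end

section
/- Let γ=(B,M,S,A,Â) be a market with middlemen. Then the associated middlemen matching market game v_γ is totally balanced: for every nonempty coalition T⊆N, the subgame (T, v_γ restricted to subsets of T) has a nonempty core. -/
/-!
Matching markets with middlemen (Atay, Bahel, Solymosi).

Players are of three sorts: buyers `B`, middlemen `M`, sellers `S`
(three disjoint nonempty finite types); the player set is `Player B M S = B ⊕ M ⊕ S`.
An (functional representation of a) `T`-matching assigns to each buyer either nothing
(the buyer is single), a seller (direct trade), or a middleman together with a seller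
(mediated trade); distinct buyers get distinct sellers, and all agents involved lie in `T`.
A middleman may mediate several trades.
-/

open scoped Classical

noncomputable section

namespace Middlemen

theorem aux_dual_min {n : Type*} [Fintype n] [Nonempty n] (W : n → n → ℝ)
    (hW : ∀ i j, 0 ≤ W i j) :
    ∃ u v : n → ℝ, (∀ i, 0 ≤ u i) ∧ (∀ j, 0 ≤ v j) ∧ (∀ i j, W i j ≤ u i + v j) ∧
      ∀ u' v' : n → ℝ, (∀ i j, W i j ≤ u' i + v' j) →
        ∑ i, u i + ∑ j, v j ≤ ∑ i, u' i + ∑ j, v' j := by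
  let F : (n → ℝ) × (n → ℝ) → ℝ := fun p => ∑ i, p.1 i + ∑ j, p.2 j
  have hF : Continuous F := by fun_prop
  let c : ℝ := ∑ i, ∑ j, W i j
  have hc : ∀ i j, W i j ≤ c := by
    intro i j
    refine le_trans ?_ (Finset.single_le_sum (f := fun i => ∑ j, W i j)
      (fun i _ => Finset.sum_nonneg fun j _ => hW i j) (Finset.mem_univ i))
    exact Finset.single_le_sum (f := fun j => W i j) (fun j _ => hW i j) (Finset.mem_univ j)
  have hc0 : 0 ≤ c := Finset.sum_nonneg fun i _ => Finset.sum_nonneg fun j _ => hW i j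
  let p0 : (n → ℝ) × (n → ℝ) := (fun _ => c, fun _ => 0)
  let K : Set ((n → ℝ) × (n → ℝ)) := {p | (∀ i, 0 ≤ p.1 i) ∧ (∀ i, 0 ≤ p.2 i) ∧
    (∀ i j, W i j ≤ p.1 i + p.2 j) ∧ F p ≤ F p0}
  have hKc : IsClosed K := by
    simp only [K, Set.ofPred_and, Set.ofPred_forall]
    refine IsClosed.inter ?_ (IsClosed.inter ?_ (IsClosed.inter ?_ ?_))
    · exact isClosed_iInter fun i => isClosed_le (by fun_prop) (by fun_prop)
    · exact isClosed_iInter fun i => isClosed_le (by fun_prop) (by fun_prop)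
    · exact isClosed_iInter fun i => isClosed_iInter fun j =>
        isClosed_le (by fun_prop) (by fun_prop)
    · exact isClosed_le hF continuous_const
  have hKs : K ⊆ Set.Icc (0 : n → ℝ) (fun _ => F p0) ×ˢ Set.Icc (0 : n → ℝ) (fun _ => F p0) := by
    rintro ⟨u, v⟩ ⟨h1, h2, h3, h4⟩
    simp only at h1 h2 h3
    have s1 : 0 ≤ ∑ i, u i := Finset.sum_nonneg fun i _ => h1 i
    have s2 : 0 ≤ ∑ i, v i := Finset.sum_nonneg fun i _ => h2 i
    have h4' : ∑ i, u i + ∑ j, v j ≤ F p0 := h4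
    refine ⟨⟨h1, fun i => ?_⟩, ⟨h2, fun i => ?_⟩⟩
    · have := Finset.single_le_sum (f := u) (fun i _ => h1 i) (Finset.mem_univ i)
      simp only; linarith
    · have := Finset.single_le_sum (f := v) (fun i _ => h2 i) (Finset.mem_univ i)
      simp only; linarith
  have hK : IsCompact K := (isCompact_Icc.prod isCompact_Icc).of_isClosed_subset hKc hKs
  have hp0 : p0 ∈ K := ⟨fun _ => hc0, fun _ => le_rfl, fun i j => by simpa [p0] using hc i j, le_rfl⟩
  obtain ⟨p, hp, hmin⟩ := hK.exists_isMinOn ⟨p0, hp0⟩ hF.continuousOn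
  refine ⟨p.1, p.2, hp.1, hp.2.1, hp.2.2.1, ?_⟩
  intro u v huv
  obtain ⟨j0, -, hj0⟩ := Finset.exists_min_image (Finset.univ : Finset n) v Finset.univ_nonempty
  let q : (n → ℝ) × (n → ℝ) := (fun i => u i + v j0, fun j => v j - v j0)
  have hq : F q = ∑ i, u i + ∑ j, v j := by
    simp only [F, q, Finset.sum_add_distrib, Finset.sum_sub_distrib]; ring
  change F p ≤ _
  rw [← hq]
  by_cases h : F q ≤ F p0
  · refine hmin (a := q) ⟨fun i => ?_, fun j => ?_, fun i j => ?_, h⟩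
    · exact (hW i j0).trans (huv i j0)
    · exact sub_nonneg.2 (hj0 j (Finset.mem_univ j))
    · have := huv i j
      simp only [q]; linarith
  · have : F p ≤ F p0 := hp.2.2.2
    linarith

theorem aux_perm {n : Type*} [Fintype n] [Nonempty n] (W : n → n → ℝ)
    (hW : ∀ i j, 0 ≤ W i j) :
    ∃ u v : n → ℝ, (∀ i, 0 ≤ u i) ∧ (∀ j, 0 ≤ v j) ∧ (∀ i j, W i j ≤ u i + v j) ∧
      ∃ σ : n → n, Function.Injective σ ∧
        ∑ i, u i + ∑ j, v j = ∑ i, W i (σ i) := by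
  obtain ⟨u, v, hu, hv, huv, hmin⟩ := aux_dual_min W hW
  refine ⟨u, v, hu, hv, huv, ?_⟩
  let t : n → Finset n := fun i => Finset.univ.filter fun j => u i + v j = W i j
  have hall : ∀ s : Finset n, s.card ≤ (s.biUnion t).card := by
    intro X
    by_contra hlt
    push Not at hlt
    let Y := X.biUnion t
    have hY : ∀ i ∈ X, ∀ j, j ∉ Y → W i j < u i + v j := by
      intro i hi j hj
      refine lt_of_le_of_ne (huv i j) fun h => hj ?_
      exact Finset.mem_biUnion.2 ⟨i, hi, by simp [t, h]⟩
    obtain ⟨ε, hε, hεs⟩ : ∃ ε > 0, ∀ i ∈ X, ∀ j, j ∉ Y → W i j + ε ≤ u i + v j := by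
      let P : Finset (n × n) := X ×ˢ (Finset.univ.filter fun j => j ∉ Y)
      by_cases hP : P.Nonempty
      · obtain ⟨p, hp, hpm⟩ := Finset.exists_min_image P
          (fun p => u p.1 + v p.2 - W p.1 p.2) hP
        simp only [P, Finset.mem_product, Finset.mem_filter, Finset.mem_univ, true_and] at hp
        refine ⟨u p.1 + v p.2 - W p.1 p.2, sub_pos.2 (hY _ hp.1 _ hp.2), fun i hi j hj => ?_⟩
        have := hpm (i, j) (by simp [P, hi, hj])
        simp only at this
        linarith
      · refine ⟨1, one_pos, fun i hi j hj => (hP ⟨(i, j), by simp [P, hi, hj]⟩).elim⟩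
    have := hmin (fun i => u i - if i ∈ X then ε else 0) (fun j => v j + if j ∈ Y then ε else 0) (by
      intro i j
      have h1 := huv i j
      by_cases hi : i ∈ X <;> by_cases hj : j ∈ Y
      · simp only [hi, hj, if_true]; linarith
      · simp only [hi, hj, if_true, if_false]
        have := hεs i hi j hj
        linarith
      · simp only [hi, hj, if_true, if_false]; linarith
      · simp only [hi, hj, if_false]; linarith)
    rw [Finset.sum_sub_distrib, Finset.sum_add_distrib, Finset.sum_ite_mem, Finset.sum_ite_mem] at this
    simp only [Finset.univ_inter, Finset.sum_const, nsmul_eq_mul] at this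
    have h2 : (Y.card : ℝ) < X.card := by exact_mod_cast hlt
    nlinarith
  obtain ⟨σ, hσ, hσt⟩ := (Finset.all_card_le_biUnion_card_iff_exists_injective t).1 hall
  refine ⟨σ, hσ, ?_⟩
  have hb : Function.Bijective σ := Finite.injective_iff_bijective.1 hσ
  rw [← hb.sum_comp v, ← Finset.sum_add_distrib]
  refine Finset.sum_congr rfl fun i _ => ?_
  simpa [t] using hσt i

theorem aux_assign {B S : Type*} [Fintype B] [Fintype S] [Nonempty B] (w : B → S → ℝ)
    (hw : ∀ i k, 0 ≤ w i k) :
    ∃ (u : B → ℝ) (v : S → ℝ), (∀ i, 0 ≤ u i) ∧ (∀ k, 0 ≤ v k) ∧ (∀ i k, w i k ≤ u i + v k) ∧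
      ∃ g : B → Option S, (∀ i i' k, g i = some k → g i' = some k → i = i') ∧
        ∑ i, u i + ∑ k, v k ≤ ∑ i, (g i).elim 0 (w i) := by
  let W : B ⊕ S → B ⊕ S → ℝ := fun x y =>
    Sum.elim (fun i => Sum.elim (fun _ => 0) (fun k => w i k) y) (fun _ => 0) x
  obtain ⟨u, v, hu, hv, huv, σ, hσ, hs⟩ := aux_perm W (by
    rintro (i | i) (k | k) <;> simp [W, hw])
  refine ⟨fun i => u (Sum.inl i), fun k => v (Sum.inr k), fun i => hu _, fun k => hv _,
    fun i k => huv (Sum.inl i) (Sum.inr k), fun i => (σ (Sum.inl i)).getRight?, ?_, ?_⟩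
  · intro i i' k h h'
    rw [Sum.getRight?_eq_some_iff] at h h'
    exact Sum.inl_injective (hσ (h.trans h'.symm))
  · rw [Fintype.sum_sum_type, Fintype.sum_sum_type, Fintype.sum_sum_type] at hs
    have e1 : ∑ k : S, W (Sum.inr k) (σ (Sum.inr k)) = 0 := by simp [W]
    have e2 : ∑ i : B, W (Sum.inl i) (σ (Sum.inl i)) =
        ∑ i, ((σ (Sum.inl i)).getRight?).elim 0 (w i) := by
      refine Finset.sum_congr rfl fun i _ => ?_
      rcases h : σ (Sum.inl i) with j | j <;> simp [W]
    have s1 : 0 ≤ ∑ k : S, u (Sum.inr k) := Finset.sum_nonneg fun i _ => hu _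
    have s2 : 0 ≤ ∑ k : B, v (Sum.inl k) := Finset.sum_nonneg fun i _ => hv _
    linarith

theorem aux_sellers {B S : Type*} [Fintype B] [Fintype S] (v : S → ℝ) (hv : ∀ k, 0 ≤ v k)
    (g : B → Option S) (hg : ∀ i i' k, g i = some k → g i' = some k → i = i') :
    ∑ i, (g i).elim 0 v ≤ ∑ k, v k := by
  have e : ∀ i, (g i).elim 0 v = ∑ k, if g i = some k then v k else 0 := by
    intro i
    rcases h : g i with _ | k <;> simp
  simp only [e]
  rw [Finset.sum_comm]
  refine Finset.sum_le_sum fun k _ => ?_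
  by_cases h : ∃ i, g i = some k
  · obtain ⟨i, hi⟩ := h
    rw [Finset.sum_eq_single i]
    · simp [hi]
    · intro i' _ hne
      exact if_neg fun h' => hne (hg _ _ _ h' hi)
    · simp
  · push Not at h
    simp [h, hv k]

/-- value of one trade -/
def tval {B M S : Type*} (A : B → S → ℝ) (Ah : B → M → S → ℝ) (i : B) (o : Option M) (k : S) : ℝ :=
  o.elim (A i k) (fun j => Ah i j k)

theorem mval_eq {B M S : Type*} [Fintype B]
    (A : B → S → ℝ) (Ah : B → M → S → ℝ) (f : MMatch B M S) :
    mval A Ah f = ∑ i, (f i).elim 0 (fun p => tval A Ah i p.1 p.2) := by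
  unfold mval
  refine Finset.sum_congr rfl fun i _ => ?_
  rcases f i with _ | ⟨_ | j, k⟩ <;> rfl

/-- the middlemen matching market game `v_γ` is totally balanced: for
every nonempty coalition `T`, the subgame on `T` has a nonempty core. -/
theorem totally_balanced
    {B M S : Type*} [Fintype B] [Fintype M] [Fintype S]
    [Nonempty B] [Nonempty M] [Nonempty S]
    (A : B → S → ℝ) (Ah : B → M → S → ℝ)
    (hA : ∀ i k, 0 ≤ A i k) (hAh : ∀ i j k, A i k ≤ Ah i j k) :
    ∀ T : Finset (Player B M S), T.Nonempty →
      ∃ x : Player B M S → ℝ, ∑ t ∈ T, x t = vGame A Ah T ∧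
        ∀ T' ⊆ T, vGame A Ah T' ≤ ∑ t ∈ T', x t := by
  intro T _
  have hbest : ∀ i k, ∃ o : Option M, (∀ j, o = some j → (mid j : Player B M S) ∈ T) ∧
      ∀ o' : Option M, (∀ j, o' = some j → (mid j : Player B M S) ∈ T) →
        tval A Ah i o' k ≤ tval A Ah i o k := by
    intro i k
    obtain ⟨o, ho, hm⟩ := Finset.exists_max_image
      (Finset.univ.filter fun o : Option M => ∀ j, o = some j → (mid j : Player B M S) ∈ T)
      (fun o => tval A Ah i o k) ⟨none, by simp⟩
    exact ⟨o, (Finset.mem_filter.1 ho).2,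
      fun o' ho' => hm o' (Finset.mem_filter.2 ⟨Finset.mem_univ _, ho'⟩)⟩
  choose best hb1 hb2 using hbest
  have htv : ∀ i o k, 0 ≤ tval A Ah i o k := by
    rintro i (_ | j) k
    · exact hA i k
    · exact (hA i k).trans (hAh i j k)
  let inT : B → S → Prop := fun i k =>
    (buyer i : Player B M S) ∈ T ∧ (seller k : Player B M S) ∈ T
  let w : B → S → ℝ := fun i k => if inT i k then tval A Ah i (best i k) k else 0
  obtain ⟨u, v, hu, hv, huv, g, hg, hs⟩ := aux_assign w (by
    intro i k
    simp only [w]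
    split_ifs
    · exact htv _ _ _
    · exact le_rfl)
  let x : Player B M S → ℝ := Sum.elim u (Sum.elim (fun _ => 0) v)
  have hx : ∀ t, 0 ≤ x t := by rintro (i | j | k) <;> simp [x, hu, hv]
  have hstab : ∀ T' ⊆ T, vGame A Ah T' ≤ ∑ t ∈ T', x t := by
    intro T' hT'
    refine csSup_le ⟨_, fun _ => none, ⟨by simp, by simp⟩, rfl⟩ ?_
    rintro r ⟨f, hf, rfl⟩
    have e : ∑ t ∈ T', x t = (∑ i, if (buyer i : Player B M S) ∈ T' then u i else 0) +
        ∑ k, if (seller k : Player B M S) ∈ T' then v k else 0 := by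
      rw [← Finset.univ_inter T', ← Finset.sum_ite_mem, Fintype.sum_sum_type,
        Fintype.sum_sum_type]
      simp [x, buyer, seller]
    rw [e, mval_eq]
    have h1 := aux_sellers (fun k => if (seller k : Player B M S) ∈ T' then v k else 0)
      (fun k => by split_ifs <;> simp [hv]) (fun i => (f i).map Prod.snd) (by
        intro i i' k h h'
        simp only [Option.map_eq_some_iff] at h h'
        obtain ⟨⟨o, k1⟩, h, rfl⟩ := h
        obtain ⟨⟨o', k2⟩, h', h3⟩ := h'
        simp only at h3
        subst h3
        exact hf.2 _ _ _ _ _ h h')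
    refine le_trans ?_ (add_le_add_right h1 _)
    rw [← Finset.sum_add_distrib]
    refine Finset.sum_le_sum fun i _ => ?_
    rcases h : f i with _ | ⟨o, k⟩
    · simp only [Option.elim, Option.map_none, add_zero]
      split_ifs <;> simp [hu]
    · obtain ⟨hi, hk, hj⟩ := hf.1 i o k h
      simp only [Option.elim, Option.map_some, hi, hk, if_true]
      refine le_trans ?_ (huv i k)
      have : inT i k := ⟨hT' hi, hT' hk⟩
      simp only [w, this, if_true]
      exact hb2 i k o fun j hoj => hT' (hj j hoj)
  refine ⟨x, le_antisymm ?_ (hstab T subset_rfl), hstab⟩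
  let f : MMatch B M S := fun i => (g i).bind fun k =>
    if inT i k then some (best i k, k) else none
  have hfi : ∀ i o k, f i = some (o, k) → g i = some k ∧ inT i k ∧ o = best i k := by
    intro i o k h
    simp only [f, Option.bind_eq_some_iff] at h
    obtain ⟨k', hk', h⟩ := h
    split_ifs at h with hin
    simp only [Option.some.injEq, Prod.mk.injEq] at h
    obtain ⟨rfl, rfl⟩ := h
    exact ⟨hk', hin, rfl⟩
  have hf : IsMatching T f := by
    refine ⟨fun i o k h => ?_, fun i i' o o' k h h' => hg _ _ _ (hfi _ _ _ h).1 (hfi _ _ _ h').1⟩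
    obtain ⟨_, hin, rfl⟩ := hfi _ _ _ h
    exact ⟨hin.1, hin.2, hb1 i k⟩
  have hle : mval A Ah f ≤ vGame A Ah T := by
    refine le_csSup ?_ ⟨f, hf, rfl⟩
    refine ((Set.finite_range (mval A Ah)).subset ?_).bddAbove
    rintro r ⟨f, -, rfl⟩
    exact ⟨f, rfl⟩
  refine le_trans ?_ hle
  have h1 : ∑ t ∈ T, x t ≤ ∑ t, x t :=
    Finset.sum_le_sum_of_subset_of_nonneg (Finset.subset_univ _) fun t _ _ => hx t
  have h2 : ∑ t, x t = ∑ i, u i + ∑ k, v k := by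
    rw [Fintype.sum_sum_type, Fintype.sum_sum_type]
    simp [x]
  have h3 : mval A Ah f = ∑ i, (g i).elim 0 (w i) := by
    rw [mval_eq]
    refine Finset.sum_congr rfl fun i _ => ?_
    rcases h : g i with _ | k
    · simp [f, h]
    · by_cases hin : inT i k <;> simp [f, h, hin, w]
  linarith

end Middlemen
end
end

section
/- Let γ=(B,M,S,A,Â) be a market with middlemen and γ*=(B,S,A*) the associated two-sided assignment market, with games v_γ and w_{γ*}. Then for every buyer i∈B and every seller k∈S, the marginal contributions in the two games coincide: mc_i(v_γ) = mc_i(w_{γ*}) and mc_k(v_γ) = mc_k(w_{γ*}). -/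
/-!
Matching markets with middlemen (Atay, Bahel, Solymosi).

Players are of three sorts: buyers `B`, middlemen `M`, sellers `S`
(three disjoint nonempty finite types); the player set is `Player B M S = B ⊕ M ⊕ S`.
An (functional representation of a) `T`-matching assigns to each buyer either nothing
(the buyer is single), a seller (direct trade), or a middleman together with a seller
(mediated trade); distinct buyers get distinct sellers, and all agents involved lie in `T`.
A middleman may mediate several trades.
-/

open scoped Classical

noncomputable section

namespace Middlemen

theorem vGame_eq_wGame_aux
    {B M S : Type*} [Fintype B] [Fintype M] [Fintype S] [Nonempty M]
    (A : B → S → ℝ) (Ah : B → M → S → ℝ)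
    (hAh : ∀ i j k, A i k ≤ Ah i j k)
    (T : Finset (Player B M S)) (R : Finset (B ⊕ S))
    (hM : ∀ j : M, mid j ∈ T) (hB : ∀ i : B, buyer i ∈ T ↔ Sum.inl i ∈ R)
    (hS : ∀ k : S, seller k ∈ T ↔ Sum.inr k ∈ R) :
    vGame A Ah T = wGame (Astar Ah) R := by
  have hle : ∀ i j k, Ah i j k ≤ Astar Ah i k := fun i j k =>
    Finset.le_sup' (fun j => Ah i j k) (Finset.mem_univ j)
  have hex : ∀ i k, ∃ j, Astar Ah i k = Ah i j k := fun i k => by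
    obtain ⟨j, -, hj⟩ := Finset.exists_mem_eq_sup' (Finset.univ_nonempty (α := M))
      (fun j => Ah i j k)
    exact ⟨j, hj⟩
  choose m hm using hex
  have hbv : BddAbove { r | ∃ f : MMatch B M S, IsMatching T f ∧ r = mval A Ah f } := by
    refine ((Set.finite_range (mval A Ah)).subset ?_).bddAbove
    rintro r ⟨f, -, rfl⟩
    exact ⟨f, rfl⟩
  have hbw : BddAbove { r | ∃ g : B → Option S, IsMatching2 R g ∧ r = m2val (Astar Ah) g } := by
    refine ((Set.finite_range (m2val (Astar Ah))).subset ?_).bddAbove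
    rintro r ⟨f, -, rfl⟩
    exact ⟨f, rfl⟩
  unfold vGame wGame
  apply le_antisymm
  · apply csSup_le
    · exact ⟨_, fun _ => none, ⟨by simp, by simp⟩, rfl⟩
    · rintro r ⟨f, hf, rfl⟩
      refine le_trans ?_ (le_csSup hbw ⟨star f, ⟨?_, ?_⟩, rfl⟩)
      · unfold mval m2val star
        apply Finset.sum_le_sum
        intro i _
        rcases f i with _ | ⟨_ | j, k⟩
        · simp
        · exact (hAh i (Classical.arbitrary M) k).trans (hle _ _ _)
        · exact hle _ _ _
      · intro i k h
        simp only [star, Option.map_eq_some_iff, Prod.exists] at h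
        obtain ⟨o, k', h, rfl⟩ := h
        have := hf.1 i o k' h
        exact ⟨(hB i).1 this.1, (hS _).1 this.2.1⟩
      · intro i i' k h h'
        simp only [star, Option.map_eq_some_iff, Prod.exists] at h h'
        obtain ⟨o, k', h, rfl⟩ := h
        obtain ⟨o', k'', h', rfl⟩ := h'
        exact hf.2 _ _ _ _ _ h h'
  · apply csSup_le
    · exact ⟨_, fun _ => none, ⟨by simp, by simp⟩, rfl⟩
    · rintro r ⟨g, hg, rfl⟩
      refine le_csSup hbv ⟨fun i => (g i).map fun k => (some (m i k), k), ⟨?_, ?_⟩, ?_⟩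
      · intro i o k h
        simp only [Option.map_eq_some_iff, Prod.mk.injEq] at h
        obtain ⟨k', h, rfl, rfl⟩ := h
        have := hg.1 i k' h
        exact ⟨(hB i).2 this.1, (hS _).2 this.2, fun j _ => hM j⟩
      · intro i i' o o' k h h'
        simp only [Option.map_eq_some_iff, Prod.mk.injEq] at h h'
        obtain ⟨k', h, rfl, rfl⟩ := h
        obtain ⟨k'', h', rfl, rfl⟩ := h'
        exact hg.2 _ _ _ h h'
      · unfold mval m2val
        apply Finset.sum_congr rfl
        intro i _
        beta_reduce
        rcases g i with _ | k
        · rfl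
        · exact hm i k

/-- for every buyer and every seller, the marginal contribution in the
middlemen market game `v_γ` coincides with that in the assignment game `w_γ*`. -/
theorem marginal_contributions_eq
    {B M S : Type*} [Fintype B] [Fintype M] [Fintype S]
    [Nonempty B] [Nonempty M] [Nonempty S]
    (A : B → S → ℝ) (Ah : B → M → S → ℝ)
    (hA : ∀ i k, 0 ≤ A i k) (hAh : ∀ i j k, A i k ≤ Ah i j k) :
    (∀ i : B, vGame A Ah Finset.univ - vGame A Ah (Finset.univ.erase (buyer i)) =
        wGame (Astar Ah) Finset.univ - wGame (Astar Ah) (Finset.univ.erase (Sum.inl i))) ∧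
    (∀ k : S, vGame A Ah Finset.univ - vGame A Ah (Finset.univ.erase (seller k)) =
        wGame (Astar Ah) Finset.univ - wGame (Astar Ah) (Finset.univ.erase (Sum.inr k))) := by
  have h0 : vGame A Ah Finset.univ = wGame (Astar Ah) Finset.univ :=
    vGame_eq_wGame_aux A Ah hAh _ _ (by simp) (by simp) (by simp)
  refine ⟨fun i => ?_, fun k => ?_⟩
  · rw [h0, vGame_eq_wGame_aux A Ah hAh (Finset.univ.erase (buyer i))
      (Finset.univ.erase (Sum.inl i)) (by simp [mid, buyer]) (by simp [buyer])
      (by simp [seller, buyer])]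
  · rw [h0, vGame_eq_wGame_aux A Ah hAh (Finset.univ.erase (seller k))
      (Finset.univ.erase (Sum.inr k)) (by simp [mid, seller]) (by simp [buyer, seller])
      (by simp [seller])]

end Middlemen
end
end

section
/- Let γ=(B,M,S,A,Â) be a market with middlemen and v_γ the associated middlemen matching market game. Then there exists a buyer-optimal core allocation: a payoff vector x^B∈Core(v_γ) such that x^B_i = mc_i(v_γ) for every buyer i∈B, i.e. every buyer simultaneously attains her marginal contribution to the grand coalition. -/
/-!
Matching markets with middlemen (Atay, Bahel, Solymosi).

Players are of three sorts: buyers `B`, middlemen `M`, sellers `S`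
(three disjoint nonempty finite types); the player set is `Player B M S = B ⊕ M ⊕ S`.
An (functional representation of a) `T`-matching assigns to each buyer either nothing
(the buyer is single), a seller (direct trade), or a middleman together with a seller
(mediated trade); distinct buyers get distinct sellers, and all agents involved lie in `T`.
A middleman may mediate several trades.
-/

open scoped Classical

noncomputable section

namespace Middlemen

/-- value of an option -/
def oval {S : Type*} (h : S → ℝ) (o : Option S) : ℝ := o.elim 0 h

/-- injectivity of a two-sided matching -/
def Inj2 {B S : Type*} (g : B → Option S) : Prop :=
  ∀ i i' k, g i = some k → g i' = some k → i = i'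

theorem oval_sum_eq {B S : Type*} [Fintype B] [Fintype S] (g : B → Option S) (y : S → ℝ) :
    ∑ i, oval y (g i) = ∑ k, ∑ i, if g i = some k then y k else 0 := by
  rw [Finset.sum_comm]
  refine Finset.sum_congr rfl fun i _ => ?_
  cases h : g i with
  | none => simp [oval]
  | some k => simp [oval]

theorem oval_sum_le {B S : Type*} [Fintype B] [Fintype S] (g : B → Option S) (hg : Inj2 g)
    (y : S → ℝ) (hy : ∀ k, 0 ≤ y k) :
    ∑ i, oval y (g i) ≤ ∑ k, y k := by
  rw [oval_sum_eq]
  refine Finset.sum_le_sum fun k _ => ?_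
  by_cases h : ∃ i, g i = some k
  · obtain ⟨i, hi⟩ := h
    rw [Finset.sum_eq_single i]
    · simp [hi]
    · intro b _ hb
      rw [if_neg]
      intro h'
      exact hb (hg _ _ _ h' hi)
    · simp
  · push Not at h
    simp [h, hy k]

theorem le_oval_sum {B S : Type*} [Fintype B] [Fintype S] (g : B → Option S)
    (y : S → ℝ) (hy : ∀ k, 0 ≤ y k) (hy0 : ∀ k, (∀ i, g i ≠ some k) → y k ≤ 0) :
    ∑ k, y k ≤ ∑ i, oval y (g i) := by
  rw [oval_sum_eq]
  refine Finset.sum_le_sum fun k _ => ?_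
  by_cases h : ∃ i, g i = some k
  · obtain ⟨i, hi⟩ := h
    have := Finset.single_le_sum (f := fun i => if g i = some k then y k else 0) (s := Finset.univ)
      (fun j _ => by split_ifs; exacts [hy k, le_rfl]) (Finset.mem_univ i)
    simpa [hi] using this
  · push Not at h
    simpa [h] using hy0 k h

/-- The exchange lemma. -/
theorem exchange {B S : Type*} [Fintype B] (a : B → S → ℝ) (μ ν : B → Option S)
    (hμ : Inj2 μ) (hν : Inj2 ν) (k : S) (hk : ∀ b, μ b ≠ some k) (c : B) (hc : ν c = none) :
    ∃ p q : B → Option S, Inj2 p ∧ Inj2 q ∧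
      (∑ i, oval (a i) (p i)) + ∑ i, oval (a i) (q i) =
        a c k + (∑ i, oval (a i) (μ i)) + ∑ i, oval (a i) (ν i) - oval (a c) none ∧
      ∀ i, μ i = none → (p i = none ∨ q i = none) := by
  let r : B → B → Prop := fun b d => ∃ s, μ b = some s ∧ ν d = some s
  let P : B → Prop := Relation.ReflTransGen r c
  have hPc : P c := Relation.ReflTransGen.refl
  have hstep : ∀ b d s, P b → μ b = some s → ν d = some s → P d := fun b d s hb h1 h2 =>
    Relation.ReflTransGen.tail hb ⟨s, h1, h2⟩
  have hinv : ∀ d s, P d → d ≠ c → ν d = some s → ∃ b, P b ∧ μ b = some s := by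
    intro d s hd hdc hs
    rcases Relation.ReflTransGen.cases_tail hd with h | ⟨b, hb, t, h1, h2⟩
    · exact absurd h hdc
    · refine ⟨b, hb, ?_⟩
      rw [h1, ← h2, hs]
  refine ⟨fun b => if b = c then some k else if P b then ν b else μ b,
    fun b => if P b then μ b else ν b, ?_, ?_, ?_, ?_⟩
  · have key : ∀ d, d ≠ c → (if P d then ν d else μ d) ≠ some k := by
      intro d hd h
      split_ifs at h with h1
      · obtain ⟨b, _, hb⟩ := hinv d k h1 hd h
        exact hk b hb
      · exact hk d h
    have key2 : ∀ b d s, b ≠ c → P b → ¬ P d → ν b = some s → μ d = some s → False := by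
      intro b d s hb h1 h2 h3 h4
      obtain ⟨b', hb', h5⟩ := hinv b s h1 hb h3
      exact h2 (hμ _ _ _ h4 h5 ▸ hb')
    intro b d s hb hd
    dsimp only at hb hd
    by_cases h1 : b = c <;> by_cases h2 : d = c
    · rw [h1, h2]
    · rw [if_pos h1] at hb
      rw [if_neg h2, ← hb] at hd
      exact absurd hd (key d h2)
    · rw [if_pos h2] at hd
      rw [if_neg h1, ← hd] at hb
      exact absurd hb (key b h1)
    · rw [if_neg h1] at hb
      rw [if_neg h2] at hd
      split_ifs at hb hd with h3 h4 h4
      · exact hν _ _ _ hb hd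
      · exact (key2 b d s h1 h3 h4 hb hd).elim
      · exact (key2 d b s h2 h4 h3 hd hb).elim
      · exact hμ _ _ _ hb hd
  · intro b d s hb hd
    dsimp only at hb hd
    split_ifs at hb hd with h3 h4 h4
    · exact hμ _ _ _ hb hd
    · exact absurd (hstep b d s h3 hb hd) h4
    · exact absurd (hstep d b s h4 hd hb) h3
    · exact hν _ _ _ hb hd
  · have e : a c k = ∑ i, if i = c then a c k else 0 := by simp
    rw [e, ← Finset.sum_add_distrib, ← Finset.sum_add_distrib, ← Finset.sum_add_distrib]
    simp only [oval, Option.elim_none, sub_zero]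
    refine Finset.sum_congr rfl fun i _ => ?_
    by_cases h1 : i = c
    · subst h1
      simp [hPc, hc]
    · by_cases h2 : P i <;> simp [h1, h2, add_comm]
  · intro i hi
    by_cases h2 : P i
    · right; simp [h2, hi]
    · left
      have : i ≠ c := fun h => h2 (h ▸ hPc)
      simp [h2, hi, this]

theorem assignment_core {B S : Type*} [Fintype B] [Fintype S] (a : B → S → ℝ)
    (V : ℝ) (W : B → ℝ)
    (hV : ∀ g, Inj2 g → ∑ i, oval (a i) (g i) ≤ V)
    (hW : ∀ g, Inj2 g → ∀ b, g b = none → ∑ i, oval (a i) (g i) ≤ W b)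
    (hV' : ∃ g, Inj2 g ∧ ∑ i, oval (a i) (g i) = V)
    (hW' : ∀ b, ∃ g, Inj2 g ∧ g b = none ∧ ∑ i, oval (a i) (g i) = W b) :
    ∃ y : S → ℝ, (∀ k, 0 ≤ y k) ∧ (∀ i, 0 ≤ V - W i) ∧ (∀ i k, a i k ≤ (V - W i) + y k) ∧
      ∑ i, (V - W i) + ∑ k, y k ≤ V := by
  have hy : ∀ k, ∃ y : ℝ, 0 ≤ y ∧ (∀ c, a c k - (V - W c) ≤ y) ∧
      (y = 0 ∨ ∃ c, y = a c k - (V - W c)) := by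
    intro k
    obtain ⟨o, ho⟩ := Finite.exists_max (fun o : Option B => oval (fun c => a c k - (V - W c)) o)
    refine ⟨oval (fun c => a c k - (V - W c)) o, ho none, fun c => ho (some c), ?_⟩
    cases o with
    | none => left; rfl
    | some c => right; exact ⟨c, rfl⟩
  choose y hy0 hy1 hy2 using hy
  obtain ⟨μ, hμ, hμV⟩ := hV'
  have hx0 : ∀ i, 0 ≤ V - W i := by
    intro i
    obtain ⟨g, hg, _, hgW⟩ := hW' i
    linarith [hV g hg]
  -- unmatched sellers
  have hun : ∀ k, (∀ i, μ i ≠ some k) → y k ≤ 0 := by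
    intro k hk
    rcases hy2 k with h | ⟨c, h⟩
    · exact h.le
    · obtain ⟨ν, hν, hνc, hνW⟩ := hW' c
      obtain ⟨p, q, hp, hq, hs, -⟩ := exchange a μ ν hμ hν k hk c hνc
      simp only [oval, Option.elim_none, sub_zero] at hs
      have := hV p hp
      have := hV q hq
      simp only [oval] at *
      linarith
  have hma : ∀ i k, μ i = some k → (V - W i) + y k ≤ a i k := by
    intro i k hik
    let μ0 : B → Option S := fun b => if b = i then none else μ b
    have hμ0 : Inj2 μ0 := by
      intro b d s hb hd
      simp only [μ0] at hb hd
      split_ifs at hb hd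
      exact hμ _ _ _ hb hd
    have hk : ∀ b, μ0 b ≠ some k := by
      intro b hb
      simp only [μ0] at hb
      split_ifs at hb with h
      exact h (hμ _ _ _ hb hik)
    have hi0 : μ0 i = none := by simp [μ0]
    have hsum : ∑ b, oval (a b) (μ0 b) = V - a i k := by
      rw [← hμV, eq_sub_iff_add_eq]
      have e : a i k = ∑ b, if b = i then a i k else 0 := by simp
      rw [e, ← Finset.sum_add_distrib]
      refine Finset.sum_congr rfl fun b _ => ?_
      by_cases h : b = i
      · subst h; simp [μ0, oval, hik]
      · simp [μ0, h]
    rcases hy2 k with h | ⟨c, h⟩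
    · have := hW μ0 hμ0 i hi0
      linarith
    · obtain ⟨ν, hν, hνc, hνW⟩ := hW' c
      obtain ⟨p, q, hp, hq, hs, hn⟩ := exchange a μ0 ν hμ0 hν k hk c hνc
      have h0 : oval (a c) none = 0 := rfl
      have h1 := hV p hp
      have h2 := hV q hq
      rcases hn i hi0 with h3 | h3
      · have := hW p hp i h3
        linarith
      · have := hW q hq i h3
        linarith
  refine ⟨y, hy0, hx0, fun i k => by linarith [hy1 k i], ?_⟩
  have h1 := le_oval_sum μ y hy0 hun
  have h2 : ∑ i, (V - W i) + ∑ i, oval y (μ i) ≤ V := by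
    conv_rhs => rw [← hμV]
    rw [← Finset.sum_add_distrib]
    refine Finset.sum_le_sum fun i _ => ?_
    cases h : μ i with
    | none =>
      have := hW μ hμ i h
      simp only [oval, Option.elim_none]
      linarith
    | some k => exact hma i k h
  linarith

section game
variable {B M S : Type*} [Fintype B] [Fintype M] [Fintype S]
  (A : B → S → ℝ) (Ah : B → M → S → ℝ)

theorem vset_finite (T : Finset (Player B M S)) :
    { r | ∃ f : MMatch B M S, IsMatching T f ∧ r = mval A Ah f }.Finite := by
  refine (Set.finite_range (mval A Ah)).subset ?_
  rintro r ⟨f, -, rfl⟩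
  exact ⟨f, rfl⟩

theorem le_vGame (T : Finset (Player B M S)) (f : MMatch B M S) (hf : IsMatching T f) :
    mval A Ah f ≤ vGame A Ah T :=
  le_csSup (vset_finite A Ah T).bddAbove ⟨f, hf, rfl⟩

theorem exists_vGame (T : Finset (Player B M S)) :
    ∃ f : MMatch B M S, IsMatching T f ∧ vGame A Ah T = mval A Ah f := by
  have : { r | ∃ f : MMatch B M S, IsMatching T f ∧ r = mval A Ah f }.Nonempty :=
    ⟨_, fun _ => none, ⟨by simp, by simp⟩, rfl⟩
  exact this.csSup_mem (vset_finite A Ah T)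

theorem star_inj {T : Finset (Player B M S)} {f : MMatch B M S} (hf : IsMatching T f) :
    Inj2 (star f) := by
  intro i i' k h h'
  simp only [star, Option.map_eq_some_iff] at h h'
  obtain ⟨⟨o, s⟩, h1, rfl⟩ := h
  obtain ⟨⟨o', s'⟩, h2, h3⟩ := h'
  simp only at h3
  subst h3
  exact hf.2 _ _ _ _ _ h1 h2

theorem mval_le_star (hAh : ∀ i j k, A i k ≤ Ah i j k) (m : B → S → M)
    (hm : ∀ i k j, Ah i j k ≤ Ah i (m i k) k) (f : MMatch B M S) :
    mval A Ah f ≤ ∑ i, oval (fun k => Ah i (m i k) k) (star f i) := by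
  refine Finset.sum_le_sum fun i _ => ?_
  rcases h : f i with _ | ⟨_ | j, k⟩
  · simp [star, h, oval]
  · simpa [star, h, oval] using hAh i _ k
  · simpa [star, h, oval] using hm i k j

theorem mval_lift (m : B → S → M) (g : B → Option S) :
    mval A Ah (fun i => (g i).map fun k => (some (m i k), k)) =
      ∑ i, oval (fun k => Ah i (m i k) k) (g i) := by
  refine Finset.sum_congr rfl fun i _ => ?_
  cases h : g i <;> simp [oval, h]

theorem lift_matching (m : B → S → M) (g : B → Option S) (hg : Inj2 g)
    (T : Finset (Player B M S)) (hT : ∀ j, mid j ∈ T) (hT' : ∀ k, seller k ∈ T)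
    (hb : ∀ i, buyer i ∉ T → g i = none) :
    IsMatching T (fun i => (g i).map fun k => (some (m i k), k)) := by
  constructor
  · intro i o k h
    refine ⟨?_, hT' k, fun j _ => hT j⟩
    by_contra hi
    simp [hb i hi] at h
  · intro i i' o o' k h h'
    simp only [Option.map_eq_some_iff, Prod.mk.injEq] at h h'
    obtain ⟨s, h1, _, rfl⟩ := h
    obtain ⟨s', h2, _, h3⟩ := h'
    subst h3
    exact hg _ _ _ h1 h2

end game

/-- there exists a buyer-optimal core allocation of `v_γ`, at which every
buyer attains her marginal contribution to the grand coalition. -/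
theorem exists_buyer_optimal_core
    {B M S : Type*} [Fintype B] [Fintype M] [Fintype S]
    [Nonempty B] [Nonempty M] [Nonempty S]
    (A : B → S → ℝ) (Ah : B → M → S → ℝ)
    (hA : ∀ i k, 0 ≤ A i k) (hAh : ∀ i j k, A i k ≤ Ah i j k) :
    ∃ x ∈ core (vGame A Ah), ∀ i : B,
      x (buyer i) = vGame A Ah Finset.univ - vGame A Ah (Finset.univ.erase (buyer i)) := by
  have hm : ∀ i k, ∃ m, ∀ j, Ah i j k ≤ Ah i m k := fun i k =>
    Finite.exists_max (fun j => Ah i j k)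
  choose m hm using hm
  have hV : ∀ g, Inj2 g → ∑ i, oval (fun k => Ah i (m i k) k) (g i) ≤ vGame A Ah Finset.univ := by
    intro g hg
    rw [← mval_lift A]
    exact le_vGame _ _ _ _ (lift_matching m g hg _ (by simp) (by simp) (by simp))
  have hW : ∀ g, Inj2 g → ∀ b, g b = none → ∑ i, oval (fun k => Ah i (m i k) k) (g i) ≤
      vGame A Ah (Finset.univ.erase (buyer b)) := by
    intro g hg b hb
    rw [← mval_lift A]
    refine le_vGame _ _ _ _ (lift_matching m g hg _ (by simp [buyer, mid])
      (by simp [buyer, seller]) ?_)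
    intro i hi
    have : i = b := by simpa [buyer] using hi
    rw [this, hb]
  obtain ⟨y, hy0, hx0, hxy, hsum⟩ := assignment_core (fun i k => Ah i (m i k) k)
    (vGame A Ah Finset.univ) (fun b => vGame A Ah (Finset.univ.erase (buyer b))) hV hW
    (by
      obtain ⟨f, hf, hv⟩ := exists_vGame A Ah Finset.univ
      refine ⟨star f, star_inj hf, le_antisymm (hV _ (star_inj hf)) ?_⟩
      rw [hv]
      exact mval_le_star A Ah hAh m hm f)
    (by
      intro b
      obtain ⟨f, hf, hv⟩ := exists_vGame A Ah (Finset.univ.erase (buyer b))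
      have hn : star f b = none := by
        rcases h : f b with _ | ⟨o, k⟩
        · simp [star, h]
        · have := (hf.1 _ _ _ h).1
          simp at this
      refine ⟨star f, star_inj hf, hn, le_antisymm (hW _ (star_inj hf) b hn) ?_⟩
      rw [hv]
      exact mval_le_star A Ah hAh m hm f)
  set x : B → ℝ := fun i => vGame A Ah Finset.univ - vGame A Ah (Finset.univ.erase (buyer i))
    with hx
  let X : Player B M S → ℝ := Sum.elim x (Sum.elim (fun _ => 0) y)
  have hT : ∀ T : Finset (Player B M S), vGame A Ah T ≤ ∑ t ∈ T, X t := by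
    intro T
    obtain ⟨f, hf, hv⟩ := exists_vGame A Ah T
    have h1 : ∑ t ∈ T, X t = ∑ i, (if (buyer i : Player B M S) ∈ T then x i else 0) +
        ∑ k, (if (seller k : Player B M S) ∈ T then y k else 0) := by
      rw [← Finset.sum_ite_mem_eq T X, Fintype.sum_sum_type, Fintype.sum_sum_type]
      simp only [X, buyer, seller, Sum.elim_inl, Sum.elim_inr, ite_self, Finset.sum_const_zero,
        zero_add]
      congr!
    have h2 := oval_sum_le (star f) (star_inj hf)
      (fun k => if (seller k : Player B M S) ∈ T then y k else 0)
      (fun k => by split_ifs; exacts [hy0 k, le_rfl])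
    rw [hv, h1]
    refine (mval_le_star A Ah hAh m hm f).trans ?_
    refine le_trans ?_ (add_le_add le_rfl h2)
    rw [← Finset.sum_add_distrib]
    refine Finset.sum_le_sum fun i _ => ?_
    rcases h : f i with _ | ⟨o, k⟩
    · simp only [star, h, oval, Option.map_none, Option.elim_none, add_zero]
      split_ifs
      exacts [hx0 i, le_rfl]
    · obtain ⟨h3, h4, -⟩ := hf.1 _ _ _ h
      simpa [star, h, oval, h3, h4] using hxy i k
  refine ⟨X, ⟨le_antisymm ?_ (hT Finset.univ), hT⟩, fun i => rfl⟩
  have : ∑ t, X t = ∑ i, x i + ∑ k, y k := by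
    simp [Fintype.sum_sum_type, X]
  rw [this]
  exact hsum

end Middlemen
end
end

section
/- There exists a market with middlemen γ=(B,M,S,A,Â) whose associated game v_γ admits no middleman-optimal core allocation: specifically, for B={b₁,b₂}, M={1,2,3}, S={s₁,s₂}, with all direct-trade surpluses a_{ik}=0, and layer surplus matrices A^(1) with entries (rows b₁,b₂; columns s₁,s₂) equal to (2,0;0,0), A^(2)=(0,0;0,10), A^(3)=(0,2;4,0) (i.e. â_{ijk}=A^(j)_{ik}), there is no core allocation (x;y;z)∈Core(v_γ) at which every middleman attains her marginal contribution; in particular mc_1(v_γ)=2 and mc_2(v_γ)=6, yet y₁+y₂ ≤ 6 for every (x;y;z)∈Core(v_γ), so y₁=2 and y₂=6 cannot hold simultaneously. -/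
/-!
Matching markets with middlemen (Atay, Bahel, Solymosi).

Players are of three sorts: buyers `B`, middlemen `M`, sellers `S`
(three disjoint nonempty finite types); the player set is `Player B M S = B ⊕ M ⊕ S`.
An (functional representation of a) `T`-matching assigns to each buyer either nothing
(the buyer is single), a seller (direct trade), or a middleman together with a seller
(mediated trade); distinct buyers get distinct sellers, and all agents involved lie in `T`.
A middleman may mediate several trades.
-/

open scoped Classical

noncomputable section

namespace Middlemen

/-- The direct-trade surpluses of the counterexample: all zero. -/
def exA : Fin 2 → Fin 2 → ℝ := fun _ _ => 0

/-- The mediated-trade surpluses of the counterexample: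
`A⁽¹⁾ = (2,0;0,0)`, `A⁽²⁾ = (0,0;0,10)`, `A⁽³⁾ = (0,2;4,0)`. -/
def exAh : Fin 2 → Fin 3 → Fin 2 → ℝ := fun i j k =>
  ![(!![2, 0; 0, 0] : Matrix (Fin 2) (Fin 2) ℝ), !![0, 0; 0, 10], !![0, 2; 4, 0]] j i k

lemma vGame_ge (T : Finset (Player (Fin 2) (Fin 3) (Fin 2))) (f : MMatch (Fin 2) (Fin 3) (Fin 2))
    (hf : IsMatching T f) : mval exA exAh f ≤ vGame exA exAh T := by
  apply le_csSup
  · have h : (Set.range (fun f : MMatch (Fin 2) (Fin 3) (Fin 2) => mval exA exAh f)).Finite :=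
      Set.finite_range _
    refine h.bddAbove.mono ?_
    rintro r ⟨f, -, rfl⟩
    exact ⟨f, rfl⟩
  · exact ⟨f, hf, rfl⟩

lemma vGame_le (T : Finset (Player (Fin 2) (Fin 3) (Fin 2))) (c : ℝ)
    (h : ∀ f, IsMatching T f → mval exA exAh f ≤ c) : vGame exA exAh T ≤ c := by
  apply csSup_le
  · exact ⟨_, fun _ => none, ⟨by simp, by simp⟩, rfl⟩
  · rintro r ⟨f, hf, rfl⟩
    exact h f hf

/-- the buyer-seller matrix with bounds on each trade. -/
lemma mval_le_s15 (T : Finset (Player (Fin 2) (Fin 3) (Fin 2))) (W : Fin 2 → Fin 2 → ℝ) (c : ℝ)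
    (hW : ∀ i j k, mid j ∈ T → exAh i j k ≤ W i k) (h0 : ∀ i k, 0 ≤ W i k)
    (h1 : W 0 0 + W 1 1 ≤ c) (h2 : W 0 1 + W 1 0 ≤ c)
    (f) (hf : IsMatching T f) : mval exA exAh f ≤ c := by
  obtain ⟨ha, hb⟩ := hf
  have key0 : ∀ i k, exA i k ≤ W i k := fun i k => h0 i k
  have key1 : ∀ i j k, f i = some (some j, k) → exAh i j k ≤ W i k :=
    fun i j k h => hW i j k ((ha i _ k h).2.2 j rfl)
  have key : ∃ u0 u1 : ℝ, mval exA exAh f = u0 + u1 ∧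
      (f 0 = none → u0 = 0) ∧ (f 1 = none → u1 = 0) ∧
      (∀ o k, f 0 = some (o, k) → u0 ≤ W 0 k) ∧ (∀ o k, f 1 = some (o, k) → u1 ≤ W 1 k) := by
    refine ⟨_, _, Fin.sum_univ_two _, ?_, ?_, ?_, ?_⟩
    · intro h; simp only [h]
    · intro h; simp only [h]
    · rintro (_ | j) k h <;> simp only [h]
      · exact key0 0 k
      · exact key1 0 j k h
    · rintro (_ | j) k h <;> simp only [h]
      · exact key0 1 k
      · exact key1 1 j k h
  obtain ⟨u0, u1, hu, n0, n1, s0, s1⟩ := key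
  rw [hu]
  have a := h0 0 0
  have b := h0 0 1
  have d := h0 1 0
  have e := h0 1 1
  rcases e0 : f 0 with _ | ⟨o, k⟩ <;> rcases e1 : f 1 with _ | ⟨o', k'⟩
  · linarith [n0 e0, n1 e1]
  · have q := s1 o' k' e1
    have q' := n0 e0
    fin_cases k' <;> simp only [Fin.zero_eta, Fin.mk_one] at q <;> linarith
  · have q := s0 o k e0
    have q' := n1 e1
    fin_cases k <;> simp only [Fin.zero_eta, Fin.mk_one] at q <;> linarith
  · have q := s0 o k e0
    have q' := s1 o' k' e1
    have hne : k ≠ k' := by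
      rintro rfl
      exact absurd (hb 0 1 o o' k e0 e1) (by decide)
    refine (add_le_add q q').trans ?_
    fin_cases k <;> fin_cases k' <;> simp at hne ⊢ <;> linarith

lemma ex1 : exAh 0 2 1 = 2 := rfl

lemma ex2 : exAh 1 2 0 = 4 := rfl

/-- two-trade matching -/
def tr (o0 : Fin 3) (k0 : Fin 2) (o1 : Fin 3) (k1 : Fin 2) : MMatch (Fin 2) (Fin 3) (Fin 2) :=
  ![some (some o0, k0), some (some o1, k1)]

lemma tr_ge (T : Finset (Player (Fin 2) (Fin 3) (Fin 2))) (o0 : Fin 3) (k0 : Fin 2) (o1 : Fin 3)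
    (k1 : Fin 2) (hk : k0 ≠ k1) (hB : ∀ i, buyer i ∈ T) (hS : ∀ k, seller k ∈ T)
    (h0 : mid o0 ∈ T) (h1 : mid o1 ∈ T) :
    exAh 0 o0 k0 + exAh 1 o1 k1 ≤ vGame exA exAh T := by
  have := vGame_ge T (tr o0 k0 o1 k1) ?_
  · simpa [mval, tr, Fin.sum_univ_two] using this
  · refine ⟨?_, ?_⟩
    · intro i o k h
      refine ⟨hB i, hS k, ?_⟩
      rintro j rfl
      fin_cases i <;> simp [tr] at h <;> obtain ⟨rfl, rfl⟩ := h <;> assumption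
    · intro i i' o o' k h h'
      fin_cases i <;> fin_cases i' <;> simp [tr] at h h' ⊢
      · exact hk (h.2.trans h'.2.symm)
      · exact hk (h'.2.trans h.2.symm)

lemma v_univ : vGame exA exAh Finset.univ = 12 := by
  apply le_antisymm
  · apply vGame_le
    apply mval_le_s15 _ (!![2, 2; 4, 10])
    · intro i j k _
      fin_cases i <;> fin_cases j <;> fin_cases k <;> norm_num [exAh]
    · intro i k; fin_cases i <;> fin_cases k <;> norm_num
    · norm_num
    · norm_num
  · have := tr_ge Finset.univ 0 0 1 1 (by decide) (by simp) (by simp) (by simp) (by simp)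
    norm_num [exAh] at this
    linarith

lemma v_erase0 : vGame exA exAh (Finset.univ.erase (mid (0 : Fin 3))) = 10 := by
  apply le_antisymm
  · apply vGame_le
    apply mval_le_s15 _ (!![0, 2; 4, 10])
    · intro i j k hj
      fin_cases i <;> fin_cases j <;> fin_cases k <;> simp [mid] at hj <;> norm_num [exAh]
    · intro i k; fin_cases i <;> fin_cases k <;> norm_num
    · norm_num
    · norm_num
  · have := tr_ge (Finset.univ.erase (mid (0 : Fin 3))) 1 0 1 1 (by decide) (by simp [mid, buyer])
      (by simp [mid, seller]) (by simp [mid]) (by simp [mid])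
    norm_num [exAh] at this
    linarith

lemma v_erase1 : vGame exA exAh (Finset.univ.erase (mid (1 : Fin 3))) = 6 := by
  apply le_antisymm
  · apply vGame_le
    apply mval_le_s15 _ (!![2, 2; 4, 0])
    · intro i j k hj
      fin_cases i <;> fin_cases j <;> fin_cases k <;> simp [mid] at hj <;> norm_num [exAh]
    · intro i k; fin_cases i <;> fin_cases k <;> norm_num
    · norm_num
    · norm_num
  · have := tr_ge (Finset.univ.erase (mid (1 : Fin 3))) 2 1 2 0 (by decide) (by simp [mid, buyer])
      (by simp [mid, seller]) (by simp [mid]) (by simp [mid])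
    rw [ex1, ex2] at this
    linarith

lemma core_le (X) (hX : X ∈ core (vGame exA exAh)) :
    X (mid (0 : Fin 3)) + X (mid (1 : Fin 3)) ≤ 6 := by
  obtain ⟨h1, h2⟩ := hX
  have h3 := h2 ((Finset.univ.erase (mid (0 : Fin 3))).erase (mid (1 : Fin 3)))
  have h4 := tr_ge ((Finset.univ.erase (mid (0 : Fin 3))).erase (mid (1 : Fin 3))) 2 1 2 0
    (by decide) (by simp [mid, buyer]) (by simp [mid, seller]) (by simp [mid]) (by simp [mid])
  rw [ex1, ex2] at h4
  have h5 := Finset.add_sum_erase Finset.univ X (Finset.mem_univ (mid (0 : Fin 3)))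
  have h6 := Finset.add_sum_erase (Finset.univ.erase (mid (0 : Fin 3))) X
    (a := mid (1 : Fin 3)) (by simp [mid])
  rw [v_univ] at h1
  linarith

/-- in the market with middlemen with `B = {b₁,b₂}`, `M = {1,2,3}`,
`S = {s₁,s₂}`, zero direct-trade surpluses and the layer matrices above, there is no
middleman-optimal core allocation: `mc₁ = 2` and `mc₂ = 6`, but `y₁ + y₂ ≤ 6` for every
core allocation, so no core allocation gives every middleman her marginal contribution. -/
theorem no_middleman_optimal_core_allocation :
    vGame exA exAh Finset.univ -
        vGame exA exAh (Finset.univ.erase (mid (0 : Fin 3))) = 2 ∧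
    vGame exA exAh Finset.univ -
        vGame exA exAh (Finset.univ.erase (mid (1 : Fin 3))) = 6 ∧
    (∀ X ∈ core (vGame exA exAh),
        X (mid (0 : Fin 3)) + X (mid (1 : Fin 3)) ≤ 6) ∧
    ¬ ∃ X ∈ core (vGame exA exAh), ∀ j : Fin 3,
        X (mid j) = vGame exA exAh Finset.univ -
          vGame exA exAh (Finset.univ.erase (mid j)) := by
  rw [v_univ, v_erase0, v_erase1]
  refine ⟨by norm_num, by norm_num, core_le, ?_⟩
  rintro ⟨X, hX, h⟩
  have h0 := h 0
  have h1 := h 1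
  rw [v_erase0] at h0
  rw [v_erase1] at h1
  have := core_le X hX
  linarith

end Middlemen
end
end
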